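/- arXiv:1806.02214 — 6 statements merged into one kernel-verified Lean document; each statement's English description precedes it below -/
import Mathlib

section
/- Let T > 0, let K be a Volterra kernel on [0,T] satisfying Condition (A) with exponent α ∈ [0, 1/4), and let R(s,t) := ∫_0^{min(s,t)} K(t,r) K(s,r) dr. If ψ₁, ψ₂: [0,T]² → ℝ are both strongly λ-Hölder bi-continuous with λ > α, or both λ-Hölder bi-continuous with λ > 2α, then the iterated 2D Young–Stieltjes sums Σ_{i,j,k,l} ψ₁(q_i, s_j) ψ₂(r_k, t_l) R(q_i,q_{i+1}; r_k,r_{k+1}) R(s_j,s_{j+1}; t_l,t_{l+1}), taken over pairs of grid partitions π₁ = {(q_i, s_j)} and π₂ = {(r_k, t_l)} of [0,T]², converge as the meshes of π₁ and π₂ tend to 0, and the limit equals ∫_{[0,T]²} (K*⊗K*)ψ₁(r₁,r₂) · (K*⊗K*)ψ₂(r₁,r₂) dr₁ dr₂. -/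
open MeasureTheory Set

noncomputable section

namespace YS

variable {E : Type*} [NormedAddCommGroup E] [NormedSpace ℝ E]

/-- A Volterra kernel: a measurable `K : ℝ² → ℝ` with `K t s = 0` whenever `s ≥ t`. -/
def IsVolterraKernel (K : ℝ → ℝ → ℝ) : Prop :=
  Measurable (Function.uncurry K) ∧ ∀ t s : ℝ, t ≤ s → K t s = 0

/-- Condition (A) with exponent `α` and constant `C`; here `K' t s` denotes the partial
derivative `∂K(t,s)/∂t`, whose existence is part of the condition. -/
def CondA (T α C : ℝ) (K K' : ℝ → ℝ → ℝ) : Prop :=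
  (∀ s t : ℝ, 0 < s → s < t → t ≤ T → |K t s| ≤ C * s ^ (-α) * (t - s) ^ (-α)) ∧
  ∀ s t : ℝ, 0 < s → s < t → t ≤ T →
    HasDerivAt (fun r => K r s) (K' t s) t ∧ |K' t s| ≤ C * (t - s) ^ (-(α + 1))

/-- The operator `𝒦*`:  `(𝒦*φ)(s) = φ(s)K(T,s) + ∫_s^T [φ(r) − φ(s)] ∂K(r,s)/∂r dr`. -/
def Kstar (T : ℝ) (K K' : ℝ → ℝ → ℝ) (φ : ℝ → E) (s : ℝ) : E :=
  K T s • φ s + ∫ r in s..T, K' r s • (φ r - φ s)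

/-- The operator `A^K`. -/
def AK (T : ℝ) (K' : ℝ → ℝ → ℝ) (φ : ℝ → E) (s : ℝ) : E :=
  ∫ r in s..T, K' r s • (φ r - φ s)

/-- Rectangular increment `f(u₁,u₂;v₁,v₂)`. -/
def rectInc (ψ : ℝ → ℝ → E) (u₁ u₂ v₁ v₂ : ℝ) : E :=
  ψ u₁ v₁ + ψ u₂ v₂ - ψ u₁ v₂ - ψ u₂ v₁

/-- The operator `B^K`. -/
def BK (T : ℝ) (K' : ℝ → ℝ → ℝ) (ψ : ℝ → ℝ → E) (u v : ℝ) : E :=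
  ∫ r₂ in v..T, ∫ r₁ in u..T, (K' r₁ u * K' r₂ v) • rectInc ψ u r₁ v r₂

/-- The operator `𝒦* ⊗ 𝒦*`. -/
def KstarT (T : ℝ) (K K' : ℝ → ℝ → ℝ) (ψ : ℝ → ℝ → E) (u v : ℝ) : E :=
  (K T u * K T v) • ψ u v + K T v • AK T K' (fun x => ψ x v) u +
    K T u • AK T K' (fun y => ψ u y) v + BK T K' ψ u v

/-- A partition `0 = s₀ < s₁ < ⋯ < s_n = T` of `[0,T]`. -/
structure Partition (T : ℝ) where
  n : ℕ
  pts : ℕ → ℝ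
  n_pos : 0 < n
  first : pts 0 = 0
  last : pts n = T
  lt : ∀ i < n, pts i < pts (i + 1)

/-- Mesh of a partition: the largest increment. -/
def Partition.mesh {T : ℝ} (P : Partition T) : ℝ :=
  (Finset.range P.n).sup' (Finset.nonempty_range_iff.mpr P.n_pos.ne')
    fun i => P.pts (i + 1) - P.pts i

/-- One-dimensional step approximation `φ^π`. -/
def step1 {T : ℝ} (P : Partition T) (φ : ℝ → E) (s : ℝ) : E :=
  ∑ i ∈ Finset.range P.n,
    (Set.Ico (P.pts i) (P.pts (i + 1))).indicator (fun _ => φ (P.pts i)) s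

/-- Two-dimensional step approximation `ψ^π` for the grid partition `P × Q`. -/
def step2 {T : ℝ} (P Q : Partition T) (ψ : ℝ → ℝ → E) (u v : ℝ) : E :=
  ∑ i ∈ Finset.range P.n, ∑ j ∈ Finset.range Q.n,
    ((Set.Ico (P.pts i) (P.pts (i + 1))) ×ˢ (Set.Ico (Q.pts j) (Q.pts (j + 1)))).indicator
      (fun _ => ψ (P.pts i) (Q.pts j)) (u, v)

/-- `λ`-Hölder continuity on `[0,T]` with constant `C`. -/
def IsHolderWith (T lam C : ℝ) (φ : ℝ → E) : Prop :=
  ∀ t₁ ∈ Icc (0:ℝ) T, ∀ t₂ ∈ Icc (0:ℝ) T, ‖φ t₁ - φ t₂‖ ≤ C * |t₁ - t₂| ^ lam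

/-- `λ`-Hölder continuity on `[0,T]`. -/
def IsHolder (T lam : ℝ) (φ : ℝ → E) : Prop := ∃ C : ℝ, IsHolderWith T lam C φ

/-- `λ`-Hölder bi-continuity with constant `C`. -/
def IsHolderBiWith (T lam C : ℝ) (ψ : ℝ → ℝ → E) : Prop :=
  (∀ u₁ ∈ Icc (0:ℝ) T, ∀ u₂ ∈ Icc (0:ℝ) T, ∀ v ∈ Icc (0:ℝ) T,
      ‖ψ u₂ v - ψ u₁ v‖ ≤ C * |u₂ - u₁| ^ lam) ∧
  ∀ u ∈ Icc (0:ℝ) T, ∀ v₁ ∈ Icc (0:ℝ) T, ∀ v₂ ∈ Icc (0:ℝ) T,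
      ‖ψ u v₂ - ψ u v₁‖ ≤ C * |v₂ - v₁| ^ lam

/-- `λ`-Hölder bi-continuity. -/
def IsHolderBi (T lam : ℝ) (ψ : ℝ → ℝ → E) : Prop := ∃ C : ℝ, IsHolderBiWith T lam C ψ

/-- Strong `λ`-Hölder bi-continuity with constant `C`. -/
def IsStrongHolderBiWith (T lam C : ℝ) (ψ : ℝ → ℝ → E) : Prop :=
  IsHolderBiWith T lam C ψ ∧
  ∀ u₁ ∈ Icc (0:ℝ) T, ∀ u₂ ∈ Icc (0:ℝ) T, ∀ v₁ ∈ Icc (0:ℝ) T, ∀ v₂ ∈ Icc (0:ℝ) T,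
    ‖rectInc ψ u₁ u₂ v₁ v₂‖ ≤ C * |u₂ - u₁| ^ lam * |v₂ - v₁| ^ lam

/-- Strong `λ`-Hölder bi-continuity. -/
def IsStrongHolderBi (T lam : ℝ) (ψ : ℝ → ℝ → E) : Prop :=
  ∃ C : ℝ, IsStrongHolderBiWith T lam C ψ

/-- The covariance function `R(s,t) = ∫_0^{s∧t} K(t,r)K(s,r) dr` of the Volterra process. -/
def covR (K : ℝ → ℝ → ℝ) (s t : ℝ) : ℝ := ∫ r in (0:ℝ)..(min s t), K t r * K s r

/-- The 2D Riemann–Stieltjes sum of `f` against `g` over the grid partition `P × Q`. -/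
def RSsum {T : ℝ} (P Q : Partition T) (f g : ℝ → ℝ → ℝ) : ℝ :=
  ∑ i ∈ Finset.range P.n, ∑ j ∈ Finset.range Q.n,
    f (P.pts i) (Q.pts j) *
      rectInc g (P.pts i) (P.pts (i + 1)) (Q.pts j) (Q.pts (j + 1))

def Hol (T lam M : ℝ) (φ : ℝ → ℝ) : Prop :=
  ∀ x ∈ Icc (0:ℝ) T, ∀ y ∈ Icc (0:ℝ) T, |φ x - φ y| ≤ M * |x - y| ^ lam

def Good (T lam M : ℝ) (φ : ℝ → ℝ) : Prop :=
  (∀ x ∈ Icc (0:ℝ) T, |φ x| ≤ M) ∧ Hol T lam M φ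

lemma Hol.continuousOn {T lam M : ℝ} {φ : ℝ → ℝ} (hlam : 0 < lam) (h : Hol T lam M φ) :
    ContinuousOn φ (Icc 0 T) := by
  intro x hx
  rw [ContinuousWithinAt, tendsto_iff_dist_tendsto_zero]
  have h0 : Filter.Tendsto (fun y : ℝ => M * |y - x| ^ lam) (nhdsWithin x (Icc 0 T)) (nhds 0) := by
    have : Continuous (fun y : ℝ => M * |y - x| ^ lam) := by
      refine continuous_const.mul (Continuous.rpow_const (by fun_prop) (fun _ => Or.inr hlam.le))
    have h1 := this.tendsto x
    simp only [sub_self, abs_zero, Real.zero_rpow hlam.ne', mul_zero] at h1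
    exact h1.mono_left nhdsWithin_le_nhds
  refine squeeze_zero' (Filter.Eventually.of_forall fun _ => dist_nonneg) ?_ h0
  filter_upwards [self_mem_nhdsWithin] with y hy
  rw [Real.dist_eq]
  exact h y hy x hx

lemma rpow_sub_integrable {u b p : ℝ} (hp : -1 < p) (a : ℝ) :
    IntervalIntegrable (fun r : ℝ => (r - u) ^ p) volume a b := by
  have := (intervalIntegral.intervalIntegrable_rpow' (a := a - u) (b := b - u) hp).comp_sub_right u
  simpa using this

lemma integral_rpow_sub {u b p : ℝ} (hp : -1 < p) :
    ∫ r in u..b, (r - u) ^ p = (b - u) ^ (p + 1) / (p + 1) := by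
  rw [intervalIntegral.integral_comp_sub_right (fun r => r ^ p), integral_rpow (Or.inl hp)]
  rw [sub_self, Real.zero_rpow (by linarith), sub_zero]

lemma rpow_rsub_integrable {u b p : ℝ} (hp : -1 < p) (a : ℝ) :
    IntervalIntegrable (fun r : ℝ => (u - r) ^ p) volume a b := by
  have := (intervalIntegral.intervalIntegrable_rpow' (a := u - a) (b := u - b) hp).comp_sub_left u
  simpa using this

lemma integral_rpow_rsub {a b p : ℝ} (hp : -1 < p) :
    ∫ r in a..b, (b - r) ^ p = (b - a) ^ (p + 1) / (p + 1) := by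
  rw [intervalIntegral.integral_comp_sub_left (fun r => r ^ p), integral_rpow (Or.inl hp)]
  rw [sub_self, Real.zero_rpow (by linarith), sub_zero]

lemma kprime_meas {T α C : ℝ} {K K' : ℝ → ℝ → ℝ} (hA : CondA T α C K K')
    {u : ℝ} (hu : u ∈ Ioo 0 T) {a b : ℝ} (ha : u ≤ a) (hb : b ≤ T) :
    AEStronglyMeasurable (fun r => K' r u) (volume.restrict (Ioc a b)) := by
  have h1 : Measurable (deriv (fun t => K t u)) := measurable_deriv _
  refine h1.aestronglyMeasurable.congr ?_
  filter_upwards [ae_restrict_mem measurableSet_Ioc] with r hr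
  exact (hA.2 u r hu.1 (lt_of_le_of_lt ha hr.1) (hr.2.trans hb)).1.deriv

lemma integrand_integrable {T α C lam M : ℝ} {K K' : ℝ → ℝ → ℝ} (hα : 0 ≤ α) (hC : 0 ≤ C)
    (hA : CondA T α C K K') (hlam : α < lam) {φ : ℝ → ℝ} (hφ : Hol T lam M φ)
    {u : ℝ} (hu : u ∈ Ioo 0 T) :
    IntervalIntegrable (fun r => K' r u * (φ r - φ u)) volume u T := by
  have hb : IntervalIntegrable (fun r : ℝ => C * M * (r - u) ^ (lam - α - 1)) volume u T :=
    (rpow_sub_integrable (by linarith) u).const_mul _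
  refine hb.mono_fun' ?_ ?_
  · rw [uIoc_of_le hu.2.le]
    refine (kprime_meas hA hu le_rfl le_rfl).mul (AEStronglyMeasurable.sub ?_ aestronglyMeasurable_const)
    refine ContinuousOn.aestronglyMeasurable ?_ measurableSet_Ioc
    exact (hφ.continuousOn (by linarith)).mono (fun x hx => ⟨by linarith [hu.1, hx.1], hx.2⟩)
  · rw [uIoc_of_le hu.2.le]
    filter_upwards [ae_restrict_mem measurableSet_Ioc] with r hr
    have hpos : 0 < r - u := by linarith [hr.1]
    have h1 := (hA.2 u r hu.1 hr.1 hr.2).2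
    have h2 := hφ r ⟨by linarith [hu.1, hr.1], hr.2⟩ u ⟨hu.1.le, hu.2.le⟩
    rw [abs_of_pos hpos] at h2
    rw [Real.norm_eq_abs, abs_mul]
    calc |K' r u| * |φ r - φ u| ≤ (C * (r - u) ^ (-(α + 1))) * (M * (r - u) ^ lam) :=
          mul_le_mul h1 h2 (abs_nonneg _) (by positivity)
      _ = C * M * ((r - u) ^ (-(α + 1)) * (r - u) ^ lam) := by ring
      _ = _ := by rw [← Real.rpow_add hpos]; congr 2; ring

lemma Kstar_eq (T : ℝ) (K K' : ℝ → ℝ → ℝ) (φ : ℝ → ℝ) (s : ℝ) :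
    Kstar T K K' φ s = K T s * φ s + ∫ r in s..T, K' r s * (φ r - φ s) := rfl

lemma Kstar_sub {T α C lam M M' : ℝ} {K K' : ℝ → ℝ → ℝ} (hα : 0 ≤ α) (hC : 0 ≤ C)
    (hA : CondA T α C K K') (hlam : α < lam) {φ χ : ℝ → ℝ} (hφ : Hol T lam M φ)
    (hχ : Hol T lam M' χ) {u : ℝ} (hu : u ∈ Ioo 0 T) :
    Kstar T K K' (fun x => φ x - χ x) u = Kstar T K K' φ u - Kstar T K K' χ u := by
  rw [Kstar_eq, Kstar_eq, Kstar_eq]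
  have : ∫ r in u..T, K' r u * (φ r - χ r - (φ u - χ u)) =
      (∫ r in u..T, K' r u * (φ r - φ u)) - ∫ r in u..T, K' r u * (χ r - χ u) := by
    rw [← intervalIntegral.integral_sub (integrand_integrable hα hC hA hlam hφ hu)
      (integrand_integrable hα hC hA hlam hχ hu)]
    congr 1; ext r; ring
  rw [this]; ring

lemma amgm_sq {a b : ℝ} (ha : 0 < a) (hb : 0 < b) (α : ℝ) :
    2 * (a ^ (-α) * b ^ (-α)) ^ 2 ≤ a ^ (-(4 * α)) + b ^ (-(4 * α)) := by
  have h1 : a ^ (-(4 * α)) = ((a ^ (-α)) ^ 2) ^ 2 := by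
    rw [← pow_mul, ← Real.rpow_natCast, ← Real.rpow_mul ha.le]; congr 1; push_cast; ring
  have h2 : b ^ (-(4 * α)) = ((b ^ (-α)) ^ 2) ^ 2 := by
    rw [← pow_mul, ← Real.rpow_natCast, ← Real.rpow_mul hb.le]; congr 1; push_cast; ring
  rw [h1, h2]
  nlinarith [sq_nonneg ((a ^ (-α)) ^ 2 - (b ^ (-α)) ^ 2)]

def V0 (T α lam C : ℝ) (u : ℝ) : ℝ :=
  C ^ 2 * (u ^ (-(4 * α)) + (T - u) ^ (-(4 * α)) + 2 * (T ^ (lam - α) / (lam - α)) ^ 2)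

lemma Kstar_bound {T α C lam M : ℝ} {K K' : ℝ → ℝ → ℝ} (hα : 0 ≤ α) (hC : 0 ≤ C)
    (hA : CondA T α C K K') (hlam : α < lam) {φ : ℝ → ℝ} (hM : 0 ≤ M) (hφ : Good T lam M φ)
    {u : ℝ} (hu : u ∈ Ioo 0 T) :
    |Kstar T K K' φ u| ≤ M * √(V0 T α lam C u) := by
  have hT : 0 < T := hu.1.trans hu.2
  have hTu : 0 < T - u := by linarith [hu.2]
  have hu0 := hu.1
  have hint : |∫ r in u..T, K' r u * (φ r - φ u)| ≤ M * (C * (T ^ (lam - α) / (lam - α))) := by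
    have hb : IntervalIntegrable (fun r : ℝ => C * M * (r - u) ^ (lam - α - 1)) volume u T :=
      (rpow_sub_integrable (by linarith) u).const_mul _
    have := intervalIntegral.norm_integral_le_of_norm_le (f := fun r => K' r u * (φ r - φ u))
      hu.2.le (Filter.Eventually.of_forall ?_) hb
    · rw [Real.norm_eq_abs] at this
      refine this.trans ?_
      rw [intervalIntegral.integral_const_mul, integral_rpow_sub (by linarith)]
      have e : lam - α - 1 + 1 = lam - α := by ring
      rw [e]
      have : (T - u) ^ (lam - α) ≤ T ^ (lam - α) :=
        Real.rpow_le_rpow hTu.le (by linarith) (by linarith)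
      have h3 : (T - u) ^ (lam - α) / (lam - α) ≤ T ^ (lam - α) / (lam - α) :=
        div_le_div_of_nonneg_right this (by linarith)
      calc _ ≤ C * M * (T ^ (lam - α) / (lam - α)) := by gcongr
        _ = _ := by ring
    · intro r hr
      have hpos : 0 < r - u := by linarith [hr.1]
      have h1 := (hA.2 u r hu.1 hr.1 hr.2).2
      have h2 := hφ.2 r ⟨by linarith [hu.1, hr.1], hr.2⟩ u ⟨hu.1.le, hu.2.le⟩
      rw [abs_of_pos hpos] at h2
      rw [Real.norm_eq_abs, abs_mul]
      calc |K' r u| * |φ r - φ u| ≤ (C * (r - u) ^ (-(α + 1))) * (M * (r - u) ^ lam) :=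
            mul_le_mul h1 h2 (abs_nonneg _) (by positivity)
        _ = C * M * ((r - u) ^ (-(α + 1)) * (r - u) ^ lam) := by ring
        _ = _ := by rw [← Real.rpow_add hpos]; congr 2; ring
  have h1 : |K T u * φ u| ≤ M * (C * (u ^ (-α) * (T - u) ^ (-α))) := by
    rw [abs_mul, mul_comm]
    refine mul_le_mul (hφ.1 u ⟨hu.1.le, hu.2.le⟩) ?_ (abs_nonneg _) hM
    rw [← mul_assoc]; exact hA.1 u T hu.1 hu.2 le_rfl
  rw [Kstar_eq]
  calc _ ≤ _ := (abs_add_le _ _).trans (add_le_add h1 hint)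
    _ = M * (C * (u ^ (-α) * (T - u) ^ (-α)) + C * (T ^ (lam - α) / (lam - α))) := by ring
    _ ≤ _ := by
      refine mul_le_mul_of_nonneg_left (Real.le_sqrt_of_sq_le ?_) hM
      have := amgm_sq hu0 hTu α
      unfold V0
      set X := u ^ (-α) * (T - u) ^ (-α)
      set Y := T ^ (lam - α) / (lam - α)
      have e : (C * X + C * Y) ^ 2 = C ^ 2 * (X + Y) ^ 2 := by ring
      rw [e]
      refine mul_le_mul_of_nonneg_left ?_ (sq_nonneg C)
      nlinarith [sq_nonneg (X - Y)]

lemma Partition.mono {T : ℝ} (P : Partition T) {i j : ℕ} (hij : i ≤ j) (hj : j ≤ P.n) :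
    P.pts i ≤ P.pts j := by
  induction j, hij using Nat.le_induction with
  | base => exact le_rfl
  | succ k hk ih => exact (ih (by omega)).trans (P.lt k (by omega)).le

lemma Partition.mem_Icc {T : ℝ} (P : Partition T) {i : ℕ} (hi : i ≤ P.n) :
    P.pts i ∈ Icc 0 T :=
  ⟨by rw [← P.first]; exact P.mono (Nat.zero_le _) hi, by
    conv_rhs => rw [← P.last]
    exact P.mono hi le_rfl⟩

lemma Partition.le_mesh {T : ℝ} (P : Partition T) {i : ℕ} (hi : i < P.n) :
    P.pts (i + 1) - P.pts i ≤ P.mesh :=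
  Finset.le_sup' (fun i => P.pts (i + 1) - P.pts i) (Finset.mem_range.mpr hi)

lemma Partition.mesh_pos {T : ℝ} (P : Partition T) : 0 < P.mesh :=
  lt_of_lt_of_le (sub_pos.mpr (P.lt 0 P.n_pos)) (P.le_mesh P.n_pos)

lemma Partition.exists_idx {T : ℝ} (P : Partition T) {u : ℝ} (hu : u ∈ Ioo 0 T) :
    ∃ m < P.n, P.pts m ≤ u ∧ u < P.pts (m + 1) := by
  classical
  have hex : ∃ k, k ≤ P.n ∧ u < P.pts k := ⟨P.n, le_rfl, by rw [P.last]; exact hu.2⟩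
  have h1 := Nat.find_spec hex
  have h0 : Nat.find hex ≠ 0 := by
    intro h
    rw [h, P.first] at h1
    linarith [hu.1, h1.2]
  obtain ⟨m, hm⟩ := Nat.exists_eq_succ_of_ne_zero h0
  rw [hm] at h1
  refine ⟨m, h1.1, ?_, h1.2⟩
  have h2 := Nat.find_min hex (m := m) (by omega)
  by_contra h
  exact h2 ⟨by omega, not_le.mp h⟩

def Lsum {T : ℝ} (P : Partition T) (K : ℝ → ℝ → ℝ) (φ : ℝ → ℝ) (u : ℝ) : ℝ :=
  ∑ i ∈ Finset.range P.n, φ (P.pts i) * (K (P.pts (i + 1)) u - K (P.pts i) u)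

def W {T : ℝ} (P : Partition T) (α : ℝ) (u : ℝ) : ℝ :=
  ∑ i ∈ Finset.range P.n, (Ico (P.pts i) (P.pts (i + 1))).indicator
    (fun u => ((P.pts (i + 1) - u) / (P.pts (i + 1) - P.pts i)) ^ (-(4 * α))) u

def dterm {T : ℝ} (P : Partition T) (K K' : ℝ → ℝ → ℝ) (φ : ℝ → ℝ) (u : ℝ) (i : ℕ) : ℝ :=
  (∫ r in (max u (P.pts i))..(max u (P.pts (i + 1))), K' r u * (φ r - φ u)) +
    (φ u - φ (P.pts i)) * (K (P.pts (i + 1)) u - K (P.pts i) u)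

lemma max_mem {T : ℝ} (P : Partition T) {u : ℝ} (hu : u ∈ Ioo 0 T) {i : ℕ} (hi : i ≤ P.n) :
    max u (P.pts i) ∈ Icc u T :=
  ⟨le_max_left _ _, max_le hu.2.le (P.mem_Icc hi).2⟩

lemma sum_adj {T : ℝ} (P : Partition T) {f : ℝ → ℝ} {u : ℝ} (hu : u ∈ Ioo 0 T)
    (hf : IntervalIntegrable f volume u T) :
    ∑ i ∈ Finset.range P.n, (∫ r in (max u (P.pts i))..(max u (P.pts (i + 1))), f r) =
      ∫ r in u..T, f r := by
  have := intervalIntegral.sum_integral_adjacent_intervals (f := f) (μ := volume)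
    (a := fun i => max u (P.pts i)) (n := P.n) (fun k hk => hf.mono_set ?_)
  · rw [this, P.first, P.last, max_eq_left hu.1.le, max_eq_right hu.2.le]
  · rw [uIcc_of_le hu.2.le]
    have h1 := max_mem P hu hk.le
    have h2 := max_mem P hu (i := k + 1) hk
    exact uIcc_subset_Icc h1 h2

lemma Kstar_sub_Lsum {T α C lam M : ℝ} {K K' : ℝ → ℝ → ℝ} (hα : 0 ≤ α) (hC : 0 ≤ C)
    (hK : IsVolterraKernel K)
    (hA : CondA T α C K K') (hlam : α < lam) {φ : ℝ → ℝ} (hφ : Hol T lam M φ)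
    {u : ℝ} (hu : u ∈ Ioo 0 T) (P : Partition T) :
    Kstar T K K' φ u - Lsum P K φ u = ∑ i ∈ Finset.range P.n, dterm P K K' φ u i := by
  have hi := integrand_integrable hα hC hA hlam hφ hu
  simp only [dterm]
  rw [Finset.sum_add_distrib, sum_adj P hu hi, Kstar_eq, Lsum]
  have : K T u = ∑ i ∈ Finset.range P.n, (K (P.pts (i + 1)) u - K (P.pts i) u) := by
    rw [Finset.sum_range_sub (fun i => K (P.pts i) u), P.last, P.first, hK.2 0 u hu.1.le, sub_zero]
  rw [this, Finset.sum_mul]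
  simp only [sub_mul, Finset.sum_sub_distrib]
  rw [← Finset.mul_sum, ← Finset.sum_mul]
  simp only [mul_sub, mul_comm (φ u), Finset.sum_sub_distrib, sub_mul, Finset.sum_mul]
  ring

lemma rpow_split {x y m lam κ : ℝ} (hx : 0 ≤ x) (hxy : x ≤ y) (hxm : x ≤ m)
    (hκ : 0 ≤ κ) (hl : κ < lam) : x ^ lam ≤ m ^ κ * y ^ (lam - κ) := by
  rcases hx.eq_or_lt with h | h
  · subst h
    rw [Real.zero_rpow (by linarith)]
    exact mul_nonneg (Real.rpow_nonneg hxm _) (Real.rpow_nonneg hxy _)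
  · have : x ^ lam = x ^ κ * x ^ (lam - κ) := by rw [← Real.rpow_add h]; congr 1; ring
    rw [this]
    exact mul_le_mul (Real.rpow_le_rpow hx hxm hκ) (Real.rpow_le_rpow hx hxy (by linarith))
      (by positivity) (Real.rpow_nonneg (by linarith) _)

/-- bound for a local piece -/
lemma piece_bound {T α C lam M κ m : ℝ} {K K' : ℝ → ℝ → ℝ} (hC : 0 ≤ C)
    (hA : CondA T α C K K') (hα : 0 ≤ α) (hκ : 0 < κ) (hlam : lam = α + 2 * κ) {φ : ℝ → ℝ}
    (hM : 0 ≤ M) (hφ : Hol T lam M φ) {u a b c : ℝ} (hu : u ∈ Ioo 0 T)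
    (ha : u ≤ a) (hab : a ≤ b) (hb : b ≤ T) (hc0 : u ≤ c) (hca : c ≤ a)
    (hm : b - a ≤ m) (hca' : c = a) :
    |∫ r in a..b, K' r u * (φ r - φ c)| ≤ M * C * m ^ κ * ∫ r in a..b, (r - u) ^ (κ - 1) := by
  subst hca'
  have hb' : IntervalIntegrable (fun r : ℝ => M * C * m ^ κ * (r - u) ^ (κ - 1)) volume c b :=
      (rpow_sub_integrable (by linarith) c).const_mul _
  have := intervalIntegral.norm_integral_le_of_norm_le (f := fun r => K' r u * (φ r - φ c))
      hab (Filter.Eventually.of_forall ?_) hb'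
  · rw [Real.norm_eq_abs] at this
    refine this.trans ?_
    rw [intervalIntegral.integral_const_mul]
  · intro r hr
    have hru : u < r := lt_of_le_of_lt ha hr.1
    have hpos : 0 < r - u := by linarith
    have hpos' : 0 < r - c := by linarith [hr.1]
    have h1 := (hA.2 u r hu.1 hru (hr.2.trans hb)).2
    have h2 := hφ r ⟨by linarith [hu.1, hr.1], hr.2.trans hb⟩ c ⟨by linarith [hu.1], by linarith [hr.2]⟩
    rw [abs_of_pos hpos'] at h2
    have h3 := rpow_split (x := r - c) (y := r - u) (m := m) (lam := lam) (κ := κ) hpos'.le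
      (by linarith) (by linarith [hr.2]) hκ.le (by linarith)
    have hm0 : 0 ≤ m := by linarith
    rw [Real.norm_eq_abs, abs_mul]
    calc |K' r u| * |φ r - φ c|
        ≤ (C * (r - u) ^ (-(α + 1))) * (M * (m ^ κ * (r - u) ^ (lam - κ))) :=
          mul_le_mul h1 (h2.trans (mul_le_mul_of_nonneg_left h3 hM)) (abs_nonneg _) (by positivity)
      _ = M * C * m ^ κ * ((r - u) ^ (-(α + 1)) * (r - u) ^ (lam - κ)) := by ring
      _ = _ := by rw [← Real.rpow_add hpos]; congr 2; rw [hlam]; ring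

lemma dterm_bound {T α C lam M κ m : ℝ} {K K' : ℝ → ℝ → ℝ} (hC : 0 ≤ C)
    (hK : IsVolterraKernel K)
    (hA : CondA T α C K K') (hα : 0 ≤ α) (hκ : 0 < κ) (hlam : lam = α + 2 * κ) {φ : ℝ → ℝ}
    (hM : 0 ≤ M) (hφ : Hol T lam M φ) {u : ℝ} (hu : u ∈ Ioo 0 T) (P : Partition T)
    (hm : P.mesh ≤ m) (hm1 : m ≤ 1) {i : ℕ} (hi : i < P.n) :
    |dterm P K K' φ u i| ≤ M * C * m ^ κ *
      ((∫ r in (max u (P.pts i))..(max u (P.pts (i + 1))), (r - u) ^ (κ - 1)) +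
      (Ico (P.pts i) (P.pts (i + 1))).indicator
       (fun u => u ^ (-α) * ((P.pts (i + 1) - u) / (P.pts (i + 1) - P.pts i)) ^ (-α)) u) := by
  have hlt := P.lt i hi
  have hmi := (P.le_mesh hi).trans hm
  have hpi := P.mem_Icc hi.le
  have hpi1 := P.mem_Icc (i := i + 1) hi
  have hu0 := hu.1
  rw [dterm]
  rcases le_or_gt (P.pts (i + 1)) u with h | h
  · rw [max_eq_left h, max_eq_left (hlt.le.trans h), hK.2 _ _ h, hK.2 _ _ (hlt.le.trans h),
      indicator_of_notMem (by rintro ⟨_, h2⟩; linarith)]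
    simp
  rcases le_or_gt (P.pts i) u with h' | h'
  · rw [max_eq_left h', max_eq_right h.le, hK.2 _ _ h', indicator_of_mem (mem_Ico.mpr ⟨h', h⟩)]
    have h1 := piece_bound hC hA hα hκ hlam hM hφ hu (a := u) (b := P.pts (i + 1)) (c := u) (m := m) le_rfl
      h.le hpi1.2 le_rfl le_rfl (by linarith) rfl
    have h2 := hφ u ⟨hu0.le, hu.2.le⟩ (P.pts i) hpi
    have h3 := hA.1 u (P.pts (i + 1)) hu0 h hpi1.2
    rw [abs_of_nonneg (show 0 ≤ u - P.pts i by linarith)] at h2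
    set Δ := P.pts (i + 1) - P.pts i with hΔ
    have hΔ0 : 0 < Δ := by linarith
    have hb0 : 0 < P.pts (i + 1) - u := by linarith
    have h4 : (u - P.pts i) ^ lam ≤ m ^ κ * Δ ^ α := by
      calc (u - P.pts i) ^ lam ≤ Δ ^ lam := Real.rpow_le_rpow (by linarith) (by linarith) (by linarith)
        _ ≤ Δ ^ (κ + α) := Real.rpow_le_rpow_of_exponent_ge hΔ0 (by linarith) (by linarith)
        _ = Δ ^ κ * Δ ^ α := Real.rpow_add hΔ0 _ _
        _ ≤ _ := by gcongr
    have h5 : |(φ u - φ (P.pts i)) * (K (P.pts (i + 1)) u - 0)| ≤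
        M * C * m ^ κ * (u ^ (-α) * ((P.pts (i + 1) - u) / Δ) ^ (-α)) := by
      rw [sub_zero, abs_mul]
      have hm0 : 0 < m := by linarith
      calc _ ≤ (M * (m ^ κ * Δ ^ α)) * (C * u ^ (-α) * (P.pts (i + 1) - u) ^ (-α)) :=
            mul_le_mul (h2.trans (mul_le_mul_of_nonneg_left h4 hM)) h3 (abs_nonneg _) (by positivity)
        _ = _ := by
          rw [Real.div_rpow hb0.le hΔ0.le, Real.rpow_neg hΔ0.le]
          field_simp
    calc _ ≤ _ := (abs_add_le _ _).trans (add_le_add h1 h5)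
      _ = _ := by ring
  · rw [max_eq_right h'.le, max_eq_right h.le, indicator_of_notMem (by rintro ⟨h2, _⟩; linarith), add_zero]
    have h1 := piece_bound hC hA hα hκ hlam hM hφ hu (a := P.pts i) (b := P.pts (i + 1)) (c := P.pts i) (m := m)
      h'.le hlt.le hpi1.2 h'.le le_rfl hmi rfl
    have hsub : uIcc (P.pts i) (P.pts (i + 1)) ⊆ Ioc u T := by
      rw [uIcc_of_le hlt.le]
      exact fun x hx => ⟨lt_of_lt_of_le h' hx.1, hx.2.trans hpi1.2⟩
    have hKi : IntervalIntegrable (fun r => K' r u) volume (P.pts i) (P.pts (i + 1)) := by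
      have hb : IntervalIntegrable (fun r : ℝ => C * (P.pts i - u) ^ (-(α + 1))) volume
        (P.pts i) (P.pts (i + 1)) := intervalIntegrable_const
      refine hb.mono_fun' ?_ ?_
      · rw [uIoc_of_le hlt.le]
        exact kprime_meas hA hu h'.le hpi1.2
      · rw [uIoc_of_le hlt.le]
        filter_upwards [ae_restrict_mem measurableSet_Ioc] with r hr
        refine (hA.2 u r hu0 (h'.trans hr.1) (hr.2.trans hpi1.2)).2.trans ?_
        refine mul_le_mul_of_nonneg_left ?_ hC
        exact Real.rpow_le_rpow_of_nonpos (by linarith) (by linarith [hr.1]) (by linarith)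
    have hft : ∫ r in (P.pts i)..(P.pts (i + 1)), K' r u = K (P.pts (i + 1)) u - K (P.pts i) u :=
      intervalIntegral.integral_eq_sub_of_hasDerivAt
        (fun x hx => (hA.2 u x hu0 (hsub hx).1 (hsub hx).2).1) hKi
    have hI := (integrand_integrable hα hC hA (by linarith) hφ hu).mono_set
      (show uIcc (P.pts i) (P.pts (i + 1)) ⊆ uIcc u T by
        rw [uIcc_of_le hu.2.le]; exact hsub.trans Ioc_subset_Icc_self)
    have : (∫ r in (P.pts i)..(P.pts (i + 1)), K' r u * (φ r - φ u)) +
        (φ u - φ (P.pts i)) * (K (P.pts (i + 1)) u - K (P.pts i) u) =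
        ∫ r in (P.pts i)..(P.pts (i + 1)), K' r u * (φ r - φ (P.pts i)) := by
      rw [← hft, ← intervalIntegral.integral_const_mul, ← intervalIntegral.integral_add hI
        (hKi.const_mul _)]
      congr 1; ext r; ring
    rw [this]
    exact h1

def VP {T : ℝ} (P : Partition T) (α κ C : ℝ) (u : ℝ) : ℝ :=
  C ^ 2 * (2 * (T ^ κ / κ) ^ 2 + W P α u + u ^ (-(4 * α)))

lemma ind_sum {T : ℝ} (P : Partition T) {u : ℝ} {m : ℕ} (hm : m < P.n) (h1 : P.pts m ≤ u)
    (h2 : u < P.pts (m + 1)) (f : ℕ → ℝ → ℝ) :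
    ∑ i ∈ Finset.range P.n, (Ico (P.pts i) (P.pts (i + 1))).indicator (f i) u = f m u := by
  rw [Finset.sum_eq_single m]
  · exact indicator_of_mem (mem_Ico.mpr ⟨h1, h2⟩) _
  · intro i hi him
    rw [Finset.mem_range] at hi
    refine indicator_of_notMem ?_ _
    rintro ⟨h3, h4⟩
    rcases lt_or_gt_of_ne him with h | h
    · have := P.mono (i := i + 1) (j := m) h hm.le
      linarith
    · have := P.mono (i := m + 1) (j := i) h hi.le
      linarith
  · intro h; exact absurd (Finset.mem_range.mpr hm) h

lemma err_bound {T α C lam M κ m : ℝ} {K K' : ℝ → ℝ → ℝ} (hC : 0 ≤ C)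
    (hK : IsVolterraKernel K)
    (hA : CondA T α C K K') (hα : 0 ≤ α) (hκ : 0 < κ) (hlam : lam = α + 2 * κ) {φ : ℝ → ℝ}
    (hM : 0 ≤ M) (hφ : Hol T lam M φ) {u : ℝ} (hu : u ∈ Ioo 0 T) (P : Partition T)
    (hm : P.mesh ≤ m) (hm1 : m ≤ 1) :
    |Kstar T K K' φ u - Lsum P K φ u| ≤ M * m ^ κ * √(VP P α κ C u) := by
  have hm0 : 0 < m := lt_of_lt_of_le P.mesh_pos hm
  have hT : 0 < T := hu.1.trans hu.2
  rw [Kstar_sub_Lsum hα hC hK hA (by linarith) hφ hu P]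
  refine (Finset.abs_sum_le_sum_abs _ _).trans ((Finset.sum_le_sum fun i hi =>
    dterm_bound hC hK hA hα hκ hlam hM hφ hu P hm hm1 (Finset.mem_range.mp hi)).trans ?_)
  rw [← Finset.mul_sum, Finset.sum_add_distrib, sum_adj P hu (rpow_sub_integrable (by linarith) u),
    integral_rpow_sub (by linarith)]
  obtain ⟨k, hk, h1, h2⟩ := P.exists_idx hu
  rw [ind_sum P hk h1 h2, VP, W, ind_sum P hk h1 h2]
  have e : κ - 1 + 1 = κ := by ring
  rw [e]
  have h3 : (T - u) ^ κ / κ ≤ T ^ κ / κ :=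
    div_le_div_of_nonneg_right (Real.rpow_le_rpow (by linarith [hu.2]) (by linarith [hu.1]) hκ.le) hκ.le
  have hq : 0 < (P.pts (k + 1) - u) / (P.pts (k + 1) - P.pts k) :=
    div_pos (by linarith) (by linarith)
  have h4 := amgm_sq hu.1 hq α
  set X := u ^ (-α) * ((P.pts (k + 1) - u) / (P.pts (k + 1) - P.pts k)) ^ (-α)
  set Y := T ^ κ / κ
  have hX : 0 ≤ X := by have := hu.1; positivity
  calc _ ≤ M * C * m ^ κ * (Y + X) := by gcongr
    _ = M * m ^ κ * (C * (Y + X)) := by ring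
    _ ≤ _ := by
      refine mul_le_mul_of_nonneg_left (Real.le_sqrt_of_sq_le ?_) (by positivity)
      rw [mul_pow]
      refine mul_le_mul_of_nonneg_left ?_ (sq_nonneg C)
      nlinarith [sq_nonneg (X - Y)]

/-- `KstarT` as an iterated operator. -/
lemma KstarT_eq {T α C lam M : ℝ} {K K' : ℝ → ℝ → ℝ} (hα : 0 ≤ α) (hC : 0 ≤ C)
    (hA : CondA T α C K K') (hlam : α < lam) {ψ : ℝ → ℝ → ℝ}
    (h1 : ∀ y ∈ Icc (0:ℝ) T, Hol T lam M (fun x => ψ x y))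
    {u v N : ℝ} (h2 : Hol T lam M (fun y => ψ u y))
    (h3 : Hol T lam N (fun y => Kstar T K K' (fun x => ψ x y) u))
    (hu : u ∈ Ioo 0 T) (hv : v ∈ Ioo 0 T) :
    KstarT T K K' ψ u v = Kstar T K K' (fun y => Kstar T K K' (fun x => ψ x y) u) v := by
  have hv' : v ∈ Icc 0 T := ⟨hv.1.le, hv.2.le⟩
  have hI2 := integrand_integrable hα hC hA hlam h2 hv
  have hI3 := integrand_integrable hα hC hA hlam h3 hv
  have key : ∀ r ∈ Icc 0 T, (∫ r₁ in u..T, (K' r₁ u * K' r v) * rectInc ψ u r₁ v r) =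
      K' r v * (Kstar T K K' (fun x => ψ x r) u - Kstar T K K' (fun x => ψ x v) u) -
        K T u * (K' r v * (ψ u r - ψ u v)) := by
    intro r hr
    have ha := integrand_integrable hα hC hA hlam (h1 r hr) hu
    have hb := integrand_integrable hα hC hA hlam (h1 v hv') hu
    rw [Kstar_eq, Kstar_eq]
    have : ∫ r₁ in u..T, (K' r₁ u * K' r v) * rectInc ψ u r₁ v r =
        K' r v * ((∫ r₁ in u..T, K' r₁ u * (ψ r₁ r - ψ u r)) -
          ∫ r₁ in u..T, K' r₁ u * (ψ r₁ v - ψ u v)) := by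
      rw [← intervalIntegral.integral_sub ha hb, ← intervalIntegral.integral_const_mul]
      congr 1; ext r₁; simp only [rectInc]; ring
    rw [this]; ring
  have hB : BK T K' ψ u v =
      (∫ r in v..T, K' r v * (Kstar T K K' (fun x => ψ x r) u - Kstar T K K' (fun x => ψ x v) u)) -
        K T u * ∫ r in v..T, K' r v * (ψ u r - ψ u v) := by
    rw [← intervalIntegral.integral_const_mul, ← intervalIntegral.integral_sub hI3 (hI2.const_mul _)]
    unfold BK
    refine intervalIntegral.integral_congr fun r hr => ?_
    rw [uIcc_of_le hv.2.le] at hr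
    simp only [smul_eq_mul]
    exact key r ⟨hv.1.le.trans hr.1, hr.2⟩
  rw [KstarT, hB, Kstar_eq T K K' (fun y => Kstar T K K' (fun x => ψ x y) u) v, Kstar_eq]
  simp only [AK, smul_eq_mul]
  ring

def SG (T lam M : ℝ) (ψ : ℝ → ℝ → ℝ) : Prop :=
  (∀ y ∈ Icc (0:ℝ) T, Good T lam M (fun x => ψ x y)) ∧
  (∀ x ∈ Icc (0:ℝ) T, Hol T lam M (fun y => ψ x y)) ∧
  (∀ y ∈ Icc (0:ℝ) T, ∀ y' ∈ Icc (0:ℝ) T,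
    Good T lam (M * |y - y'| ^ lam) (fun x => ψ x y - ψ x y'))

lemma Lsum_sub {T : ℝ} (P : Partition T) (K : ℝ → ℝ → ℝ) (φ χ : ℝ → ℝ) (u : ℝ) :
    Lsum P K (fun x => φ x - χ x) u = Lsum P K φ u - Lsum P K χ u := by
  simp only [Lsum, ← Finset.sum_sub_distrib]
  exact Finset.sum_congr rfl fun i _ => by ring

lemma main_pointwise {T α C lam M κ m : ℝ} {K K' : ℝ → ℝ → ℝ} (hC : 0 ≤ C)
    (hK : IsVolterraKernel K)
    (hA : CondA T α C K K') (hα : 0 ≤ α) (hκ : 0 < κ) (hlam : lam = α + 2 * κ) {ψ : ℝ → ℝ → ℝ}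
    (hM : 0 ≤ M) (hψ : SG T lam M ψ) {u v : ℝ} (hu : u ∈ Ioo 0 T) (hv : v ∈ Ioo 0 T)
    (P Q : Partition T) (hP : P.mesh ≤ m) (hQ : Q.mesh ≤ m) (hm1 : m ≤ 1)
    {A B : ℝ} (hA1 : V0 T α lam C u ≤ A) (hA2 : VP P α κ C u ≤ A)
    (hB1 : V0 T α lam C v ≤ B) (hB2 : VP Q α κ C v ≤ B) :
    KstarT T K K' ψ u v = Kstar T K K' (fun y => Kstar T K K' (fun x => ψ x y) u) v ∧
    |KstarT T K K' ψ u v| ≤ M * (√A * √B) ∧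
    |KstarT T K K' ψ u v - Lsum Q K (fun y => Lsum P K (fun x => ψ x y) u) v| ≤
      3 * m ^ κ * M * (√A * √B) := by
  have hm0 : 0 < m := lt_of_lt_of_le P.mesh_pos hP
  have hmκ : m ^ κ ≤ 1 := Real.rpow_le_one hm0.le hm1 hκ.le
  have hmκ0 : 0 ≤ m ^ κ := by positivity
  have hl : α < lam := by linarith
  obtain ⟨g1, g2, g3⟩ := hψ
  have a1 : ∀ {N : ℝ} {φ : ℝ → ℝ}, 0 ≤ N → Good T lam N φ → |Kstar T K K' φ u| ≤ N * √A :=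
    fun hN hφ => (Kstar_bound hα hC hA hl hN hφ hu).trans
      (mul_le_mul_of_nonneg_left (Real.sqrt_le_sqrt hA1) hN)
  have a2 : ∀ {N : ℝ} {φ : ℝ → ℝ}, 0 ≤ N → Good T lam N φ →
      |Kstar T K K' φ u - Lsum P K φ u| ≤ N * m ^ κ * √A :=
    fun hN hφ => (err_bound hC hK hA hα hκ hlam hN hφ.2 hu P hP hm1).trans
      (mul_le_mul_of_nonneg_left (Real.sqrt_le_sqrt hA2) (by positivity))
  have b1 : ∀ {N : ℝ} {φ : ℝ → ℝ}, 0 ≤ N → Good T lam N φ → |Kstar T K K' φ v| ≤ N * √B :=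
    fun hN hφ => (Kstar_bound hα hC hA hl hN hφ hv).trans
      (mul_le_mul_of_nonneg_left (Real.sqrt_le_sqrt hB1) hN)
  have b2 : ∀ {N : ℝ} {φ : ℝ → ℝ}, 0 ≤ N → Good T lam N φ →
      |Kstar T K K' φ v - Lsum Q K φ v| ≤ N * m ^ κ * √B :=
    fun hN hφ => (err_bound hC hK hA hα hκ hlam hN hφ.2 hv Q hQ hm1).trans
      (mul_le_mul_of_nonneg_left (Real.sqrt_le_sqrt hB2) (by positivity))
  set G : ℝ → ℝ := fun y => Kstar T K K' (fun x => ψ x y) u with hG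
  set F : ℝ → ℝ := fun y => Lsum P K (fun x => ψ x y) u with hF
  have gG : Good T lam (M * √A) G := by
    refine ⟨fun y hy => a1 hM (g1 y hy), fun y hy y' hy' => ?_⟩
    have := a1 (by positivity) (g3 y hy y' hy')
    rw [Kstar_sub hα hC hA hl (g1 y hy).2 (g1 y' hy').2 hu] at this
    exact this.trans_eq (by ring)
  have gD : Good T lam (M * m ^ κ * √A) (fun y => G y - F y) := by
    refine ⟨fun y hy => a2 hM (g1 y hy), fun y hy y' hy' => ?_⟩
    have := a2 (by positivity) (g3 y hy y' hy')
    rw [Kstar_sub hα hC hA hl (g1 y hy).2 (g1 y' hy').2 hu, Lsum_sub] at this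
    have e : G y - F y - (G y' - F y') = G y - G y' - (F y - F y') := by ring
    simp only [e]
    exact this.trans_eq (by ring)
  have hle : M * √A + M * m ^ κ * √A ≤ 2 * (M * √A) := by
    have : M * √A * m ^ κ ≤ M * √A * 1 := mul_le_mul_of_nonneg_left hmκ (by positivity)
    nlinarith
  have gF : Good T lam (2 * (M * √A)) F := by
    refine ⟨fun y hy => ?_, fun y hy y' hy' => ?_⟩
    · have h1 := gG.1 y hy
      have h2 := gD.1 y hy
      have e : F y = G y - (G y - F y) := by ring
      rw [e]
      exact (abs_sub _ _).trans (by linarith)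
    · have h1 := gG.2 y hy y' hy'
      have h2 := gD.2 y hy y' hy'
      have e : F y - F y' = (G y - G y') - ((G y - F y) - (G y' - F y')) := by ring
      rw [e]
      refine (abs_sub _ _).trans ((add_le_add h1 h2).trans ?_)
      rw [← add_mul]
      exact mul_le_mul_of_nonneg_right hle (by positivity)
  have hu' : u ∈ Icc 0 T := ⟨hu.1.le, hu.2.le⟩
  have hE := KstarT_eq hα hC hA hl (fun y hy => (g1 y hy).2) (g2 u hu') gG.2 hu hv
  refine ⟨hE, ?_, ?_⟩
  · rw [hE]
    exact (b1 (by positivity) gG).trans_eq (by ring)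
  · rw [hE]
    have h1 := b1 (by positivity) gD
    rw [Kstar_sub hα hC hA hl gG.2 gF.2 hv] at h1
    have h2 := b2 (by positivity) gF
    have e : Kstar T K K' G v - Lsum Q K F v =
      (Kstar T K K' G v - Kstar T K K' F v) + (Kstar T K K' F v - Lsum Q K F v) := by ring
    rw [e]
    refine (abs_add_le _ _).trans ((add_le_add h1 h2).trans_eq ?_)
    ring

/-! measurability -/

def Kd (T : ℝ) (K' : ℝ → ℝ → ℝ) (p : ℝ × ℝ) : ℝ :=
  {p : ℝ × ℝ | 0 < p.2 ∧ p.2 < p.1 ∧ p.1 ≤ T}.indicator (fun p => K' p.1 p.2) p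

lemma Kd_meas {T α C : ℝ} {K K' : ℝ → ℝ → ℝ} (hK : IsVolterraKernel K) (hA : CondA T α C K K') :
    Measurable (Kd T K') := by
  have hS : MeasurableSet {p : ℝ × ℝ | 0 < p.2 ∧ p.2 < p.1 ∧ p.1 ≤ T} :=
    (measurableSet_lt measurable_const measurable_snd).inter
      ((measurableSet_lt measurable_snd measurable_fst).inter
        (measurableSet_le measurable_fst measurable_const))
  refine measurable_of_tendsto_metrizable
    (f := fun (n : ℕ) (p : ℝ × ℝ) => {p : ℝ × ℝ | 0 < p.2 ∧ p.2 < p.1 ∧ p.1 ≤ T}.indicator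
      (fun p => (1 / ((n : ℝ) + 1))⁻¹ * (K (p.1 + 1 / ((n : ℝ) + 1)) p.2 - K p.1 p.2)) p) ?_ ?_
  · intro n
    refine Measurable.indicator ?_ hS
    refine measurable_const.mul (Measurable.sub ?_ hK.1)
    exact hK.1.comp (f := fun p : ℝ × ℝ => (p.1 + 1 / ((n : ℝ) + 1), p.2)) (by fun_prop)
  · rw [tendsto_pi_nhds]
    intro p
    by_cases hp : p ∈ {p : ℝ × ℝ | 0 < p.2 ∧ p.2 < p.1 ∧ p.1 ≤ T}
    · simp only [Kd, indicator_of_mem hp]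
      have h := (hA.2 p.2 p.1 hp.1 hp.2.1 hp.2.2).1
      rw [hasDerivAt_iff_tendsto_slope_zero] at h
      have h0 : Filter.Tendsto (fun n : ℕ => 1 / ((n : ℝ) + 1)) Filter.atTop
          (nhdsWithin 0 {0}ᶜ) := by
        refine tendsto_nhdsWithin_iff.mpr ⟨tendsto_one_div_add_atTop_nhds_zero_nat, ?_⟩
        refine Filter.Eventually.of_forall fun n => ?_
        have : (0:ℝ) < 1 / ((n : ℝ) + 1) := by positivity
        exact this.ne'
      exact h.comp h0
    · simp only [Kd, indicator_of_notMem hp]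
      exact tendsto_const_nhds

def Km (T : ℝ) (K K' : ℝ → ℝ → ℝ) (φ : ℝ → ℝ) (u : ℝ) : ℝ :=
  K T u * φ u + ∫ r, Kd T K' (r, u) * (φ r - φ u)

lemma Km_meas {T α C : ℝ} {K K' : ℝ → ℝ → ℝ} (hK : IsVolterraKernel K) (hA : CondA T α C K K')
    {h : ℝ → ℝ → ℝ} (hh : Measurable (fun p : ℝ × ℝ => h p.1 p.2)) :
    Measurable (fun p : ℝ × ℝ => Km T K K' (h p.1) p.2) := by
  unfold Km
  refine Measurable.add (Measurable.mul ?_ hh) ?_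
  · exact hK.1.comp (f := fun p : ℝ × ℝ => (T, p.2)) (by fun_prop)
  · have : Measurable (fun q : (ℝ × ℝ) × ℝ => Kd T K' (q.2, q.1.2) * (h q.1.1 q.2 - h q.1.1 q.1.2)) := by
      refine Measurable.mul ((Kd_meas hK hA).comp (by fun_prop)) (Measurable.sub ?_ ?_)
      · exact hh.comp (f := fun q : (ℝ × ℝ) × ℝ => (q.1.1, q.2)) (by fun_prop)
      · exact hh.comp (f := fun q : (ℝ × ℝ) × ℝ => (q.1.1, q.1.2)) (by fun_prop)
    exact (this.stronglyMeasurable.integral_prod_right').measurable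

lemma Km_eq {T : ℝ} {K K' : ℝ → ℝ → ℝ} {φ χ : ℝ → ℝ} {u : ℝ} (hu : u ∈ Ioo 0 T)
    (h : ∀ x ∈ Icc 0 T, φ x = χ x) : Km T K K' φ u = Kstar T K K' χ u := by
  rw [Km, Kstar_eq, h u ⟨hu.1.le, hu.2.le⟩, intervalIntegral.integral_of_le hu.2.le,
    ← integral_indicator measurableSet_Ioc]
  congr 2
  ext r
  by_cases hr : r ∈ Ioc u T
  · rw [indicator_of_mem hr, Kd, indicator_of_mem (show (r, u) ∈ {p : ℝ × ℝ | 0 < p.2 ∧ p.2 < p.1 ∧ p.1 ≤ T} from ⟨hu.1, hr.1, hr.2⟩),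
      h r ⟨hu.1.le.trans hr.1.le, hr.2⟩]
  · rw [indicator_of_notMem hr, Kd, indicator_of_notMem, zero_mul]
    exact fun hh => hr ⟨hh.2.1, hh.2.2⟩

lemma KstarT_meas {T α C lam M : ℝ} {K K' : ℝ → ℝ → ℝ} (hT : 0 < T) (hl : 0 < lam)
    (hK : IsVolterraKernel K) (hA : CondA T α C K K') {ψ : ℝ → ℝ → ℝ} (hψ : SG T lam M ψ)
    (hE : ∀ u ∈ Ioo 0 T, ∀ v ∈ Ioo 0 T,
      KstarT T K K' ψ u v = Kstar T K K' (fun y => Kstar T K K' (fun x => ψ x y) u) v) :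
    AEStronglyMeasurable (fun p : ℝ × ℝ => KstarT T K K' ψ p.1 p.2)
      ((volume.restrict (Ioo 0 T)).prod (volume.restrict (Ioo 0 T))) := by
  set pr : ℝ → ℝ := fun x => (projIcc 0 T hT.le x : ℝ) with hpr
  have prc : Continuous pr := continuous_subtype_val.comp continuous_projIcc
  have prm : ∀ x, pr x ∈ Icc 0 T := fun x => (projIcc 0 T hT.le x).2
  have pre : ∀ x ∈ Icc 0 T, pr x = x := fun x hx => by
    simp only [hpr, projIcc_of_mem hT.le hx]
  have m0 : Measurable (fun p : ℝ × ℝ => ψ (pr p.2) (pr p.1)) := by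
    refine measurable_uncurry_of_continuous_of_measurable (u := fun y x => ψ (pr x) (pr y)) ?_ ?_
    · intro x
      exact ((hψ.2.1 (pr x) (prm x)).continuousOn hl).comp_continuous prc prm
    · intro y
      exact (((hψ.1 (pr y) (prm y)).2.continuousOn hl).comp_continuous prc prm).measurable
  have m1 := Km_meas hK hA (h := fun y x => ψ (pr x) (pr y)) m0
  have m2 := Km_meas hK hA (h := fun u y => Km T K K' (fun x => ψ (pr x) (pr y)) u)
    (m1.comp (f := Prod.swap) measurable_swap)
  refine m2.aestronglyMeasurable.congr ?_
  rw [Measure.prod_restrict]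
  filter_upwards [ae_restrict_mem (measurableSet_Ioo.prod measurableSet_Ioo)] with p hp
  rw [hE p.1 hp.1 p.2 hp.2]
  refine Km_eq hp.2 fun y hy => Km_eq hp.1 fun x hx => ?_
  rw [pre x hx, pre y hy]

abbrev mu (T : ℝ) : Measure ℝ := volume.restrict (Ioo 0 T)

lemma int_mu {T : ℝ} (hT : 0 ≤ T) {f : ℝ → ℝ} (h : IntervalIntegrable f volume 0 T) :
    Integrable f (mu T) :=
  ((intervalIntegrable_iff_integrableOn_Ioc_of_le hT).mp h).mono_set Ioo_subset_Ioc_self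

lemma K_memLp {T α C : ℝ} {K K' : ℝ → ℝ → ℝ} (hT : 0 < T) (hα' : α < 1 / 4) (hC : 0 ≤ C)
    (hK : IsVolterraKernel K) (hA : CondA T α C K K') {t : ℝ} (ht : t ≤ T) :
    MemLp (K t) 2 (mu T) := by
  have hm : Measurable (K t) := hK.1.comp (f := fun u : ℝ => (t, u)) (by fun_prop)
  rw [memLp_two_iff_integrable_sq hm.aestronglyMeasurable]
  have i1 : Integrable (fun u : ℝ => C ^ 2 * (u ^ (-(4 * α)) + |(t - u) ^ (-(4 * α))|)) (mu T) := by
    refine Integrable.const_mul (Integrable.add ?_ (Integrable.abs ?_)) _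
    · exact int_mu hT.le (intervalIntegral.intervalIntegrable_rpow' (by linarith))
    · exact int_mu hT.le (rpow_rsub_integrable (by linarith) 0)
  refine i1.mono' (hm.pow_const 2).aestronglyMeasurable ?_
  filter_upwards [ae_restrict_mem measurableSet_Ioo] with u hu
  have hu0 := hu.1
  rw [Real.norm_eq_abs, abs_of_nonneg (sq_nonneg _)]
  rcases le_or_gt t u with h | h
  · rw [hK.2 t u h]
    have : 0 ≤ C ^ 2 * (u ^ (-(4 * α)) + |(t - u) ^ (-(4 * α))|) := by positivity
    simpa using this
  · have h1 := hA.1 u t hu0 h ht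
    have htu : 0 < t - u := by linarith
    have h2 := amgm_sq hu0 htu α
    have h3 := le_abs_self ((t - u) ^ (-(4 * α)))
    rw [← sq_abs]
    calc |K t u| ^ 2 ≤ (C * u ^ (-α) * (t - u) ^ (-α)) ^ 2 := by gcongr
      _ = C ^ 2 * (u ^ (-α) * (t - u) ^ (-α)) ^ 2 := by ring
      _ ≤ _ := by
        refine mul_le_mul_of_nonneg_left ?_ (sq_nonneg C)
        nlinarith [sq_nonneg (u ^ (-α) * (t - u) ^ (-α))]

lemma K_int {T α C : ℝ} {K K' : ℝ → ℝ → ℝ} (hT : 0 < T) (hα' : α < 1 / 4) (hC : 0 ≤ C)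
    (hK : IsVolterraKernel K) (hA : CondA T α C K K') {s t : ℝ} (hs : s ≤ T) (ht : t ≤ T) :
    Integrable (fun u => K t u * K s u) (mu T) :=
  (K_memLp hT hα' hC hK hA ht).integrable_mul (K_memLp hT hα' hC hK hA hs)

lemma covR_eq {T : ℝ} {K : ℝ → ℝ → ℝ} (hK : IsVolterraKernel K) {s t : ℝ} (hs : s ∈ Icc 0 T)
    (ht : t ∈ Icc 0 T) : covR K s t = ∫ u, K t u * K s u ∂(mu T) := by
  have h0 : 0 ≤ min s t := le_min hs.1 ht.1
  rw [covR, intervalIntegral.integral_of_le h0, ← integral_Ioc_eq_integral_Ioo]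
  symm
  refine setIntegral_eq_of_subset_of_forall_sdiff_eq_zero measurableSet_Ioc
    (Ioc_subset_Ioc_right ((min_le_left _ _).trans hs.2)) ?_
  intro x hx
  have : min s t ≤ x := by
    by_contra h
    exact hx.2 ⟨hx.1.1, (not_le.mp h).le⟩
  rcases min_le_iff.mp this with h | h
  · rw [hK.2 s x h, mul_zero]
  · rw [hK.2 t x h, zero_mul]

lemma rect_eq {T α C : ℝ} {K K' : ℝ → ℝ → ℝ} (hT : 0 < T) (hα' : α < 1 / 4) (hC : 0 ≤ C)
    (hK : IsVolterraKernel K) (hA : CondA T α C K K') {a b c d : ℝ} (ha : a ∈ Icc 0 T)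
    (hb : b ∈ Icc 0 T) (hc : c ∈ Icc 0 T) (hd : d ∈ Icc 0 T) :
    Integrable (fun u => (K b u - K a u) * (K d u - K c u)) (mu T) ∧
    rectInc (covR K) a b c d = ∫ u, (K b u - K a u) * (K d u - K c u) ∂(mu T) := by
  have hI : ∀ {s t : ℝ}, s ∈ Icc 0 T → t ∈ Icc 0 T → Integrable (fun u => K t u * K s u) (mu T) :=
    fun hs ht => K_int hT hα' hC hK hA hs.2 ht.2
  have e : (fun u => (K b u - K a u) * (K d u - K c u)) =
      fun u => K c u * K a u + K d u * K b u - K d u * K a u - K c u * K b u := by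
    ext u; ring
  rw [e]
  have j1 : Integrable (fun u => K c u * K a u + K d u * K b u) (mu T) :=
    (hI ha hc).add (hI hb hd)
  have j2 : Integrable (fun u => K c u * K a u + K d u * K b u - K d u * K a u) (mu T) :=
    j1.sub (hI ha hd)
  refine ⟨j2.sub (hI hb hc), ?_⟩
  rw [integral_sub j2 (hI hb hc), integral_sub j1 (hI ha hd), integral_add (hI ha hc) (hI hb hd),
    rectInc, covR_eq hK ha hc, covR_eq hK hb hd, covR_eq hK ha hd, covR_eq hK hb hc]

lemma sum_eq {T α C : ℝ} {K K' : ℝ → ℝ → ℝ} (hT : 0 < T) (hα' : α < 1 / 4) (hC : 0 ≤ C)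
    (hK : IsVolterraKernel K) (hA : CondA T α C K K') (ψ₁ ψ₂ : ℝ → ℝ → ℝ)
    (P₁ P₂ Q₁ Q₂ : Partition T) :
    Integrable (fun z : ℝ × ℝ => Lsum P₂ K (fun y => Lsum P₁ K (fun x => ψ₁ x y) z.1) z.2 *
      Lsum Q₂ K (fun y => Lsum Q₁ K (fun x => ψ₂ x y) z.1) z.2) ((mu T).prod (mu T)) ∧
    (∑ i ∈ Finset.range P₁.n, ∑ j ∈ Finset.range P₂.n, ∑ k ∈ Finset.range Q₁.n,
          ∑ l ∈ Finset.range Q₂.n,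
          ψ₁ (P₁.pts i) (P₂.pts j) * ψ₂ (Q₁.pts k) (Q₂.pts l) *
            rectInc (covR K) (P₁.pts i) (P₁.pts (i + 1)) (Q₁.pts k) (Q₁.pts (k + 1)) *
            rectInc (covR K) (P₂.pts j) (P₂.pts (j + 1)) (Q₂.pts l) (Q₂.pts (l + 1))) =
    ∫ z : ℝ × ℝ, Lsum P₂ K (fun y => Lsum P₁ K (fun x => ψ₁ x y) z.1) z.2 *
      Lsum Q₂ K (fun y => Lsum Q₁ K (fun x => ψ₂ x y) z.1) z.2 ∂((mu T).prod (mu T)) := by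
  let D : Partition T → ℕ → ℝ → ℝ := fun P i u => K (P.pts (i + 1)) u - K (P.pts i) u
  have e : (fun z : ℝ × ℝ => Lsum P₂ K (fun y => Lsum P₁ K (fun x => ψ₁ x y) z.1) z.2 *
      Lsum Q₂ K (fun y => Lsum Q₁ K (fun x => ψ₂ x y) z.1) z.2) = fun z =>
      ∑ i ∈ Finset.range P₁.n, ∑ j ∈ Finset.range P₂.n, ∑ k ∈ Finset.range Q₁.n,
          ∑ l ∈ Finset.range Q₂.n, (ψ₁ (P₁.pts i) (P₂.pts j) * ψ₂ (Q₁.pts k) (Q₂.pts l)) *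
          ((D P₁ i z.1 * D Q₁ k z.1) * (D P₂ j z.2 * D Q₂ l z.2)) := by
    ext z
    simp only [Lsum, Finset.sum_mul]
    rw [Finset.sum_comm]
    refine Finset.sum_congr rfl fun i _ => Finset.sum_congr rfl fun j _ => ?_
    rw [Finset.mul_sum, Finset.sum_comm]
    refine Finset.sum_congr rfl fun l _ => ?_
    rw [Finset.mul_sum]
    refine Finset.sum_congr rfl fun k _ => ?_
    simp only [D]; ring
  have hr : ∀ (P Q : Partition T) (i k : ℕ), i ∈ Finset.range P.n → k ∈ Finset.range Q.n →
      Integrable (fun u => D P i u * D Q k u) (mu T) ∧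
      rectInc (covR K) (P.pts i) (P.pts (i + 1)) (Q.pts k) (Q.pts (k + 1)) =
        ∫ u, D P i u * D Q k u ∂(mu T) := by
    intro P Q i k hi hk
    rw [Finset.mem_range] at hi hk
    exact rect_eq hT hα' hC hK hA (P.mem_Icc hi.le) (P.mem_Icc hi) (Q.mem_Icc hk.le) (Q.mem_Icc hk)
  have hI : ∀ i ∈ Finset.range P₁.n, ∀ j ∈ Finset.range P₂.n, ∀ k ∈ Finset.range Q₁.n,
      ∀ l ∈ Finset.range Q₂.n, Integrable (fun z : ℝ × ℝ =>
        (ψ₁ (P₁.pts i) (P₂.pts j) * ψ₂ (Q₁.pts k) (Q₂.pts l)) *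
          ((D P₁ i z.1 * D Q₁ k z.1) * (D P₂ j z.2 * D Q₂ l z.2))) ((mu T).prod (mu T)) :=
    fun i hi j hj k hk l hl => Integrable.const_mul
      ((hr P₁ Q₁ i k hi hk).1.mul_prod (hr P₂ Q₂ j l hj hl).1) _
  rw [e]
  refine ⟨integrable_finsetSum _ fun i hi => integrable_finsetSum _ fun j hj =>
    integrable_finsetSum _ fun k hk => integrable_finsetSum _ fun l hl =>
    hI i hi j hj k hk l hl, ?_⟩
  rw [integral_finsetSum _ fun i hi => integrable_finsetSum _ fun j hj =>
    integrable_finsetSum _ fun k hk => integrable_finsetSum _ fun l hl =>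
    hI i hi j hj k hk l hl]
  refine Finset.sum_congr rfl fun i hi => ?_
  rw [integral_finsetSum _ fun j hj =>
    integrable_finsetSum _ fun k hk => integrable_finsetSum _ fun l hl =>
    hI i hi j hj k hk l hl]
  refine Finset.sum_congr rfl fun j hj => ?_
  rw [integral_finsetSum _ fun k hk => integrable_finsetSum _ fun l hl =>
    hI i hi j hj k hk l hl]
  refine Finset.sum_congr rfl fun k hk => ?_
  rw [integral_finsetSum _ fun l hl => hI i hi j hj k hk l hl]
  refine Finset.sum_congr rfl fun l hl => ?_
  rw [integral_const_mul, integral_prod_mul (fun u => D P₁ i u * D Q₁ k u)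
    (fun v => D P₂ j v * D Q₂ l v), (hr P₁ Q₁ i k hi hk).2, (hr P₂ Q₂ j l hj hl).2, mul_assoc]

lemma W_nonneg {T : ℝ} (P : Partition T) (α : ℝ) (u : ℝ) : 0 ≤ W P α u := by
  refine Finset.sum_nonneg fun i hi => indicator_nonneg (fun v hv => ?_) u
  exact Real.rpow_nonneg (div_nonneg (by linarith [hv.2]) (by linarith [hv.1, hv.2])) _

lemma W_term {a b α : ℝ} (T : ℝ) (hab : a < b) (hα' : α < 1 / 4) :
    Integrable ((Ico a b).indicator (fun u => ((b - u) / (b - a)) ^ (-(4 * α)))) (mu T) ∧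
    ∫ u, (Ico a b).indicator (fun u => ((b - u) / (b - a)) ^ (-(4 * α))) u ∂(mu T) ≤
      (b - a) / (1 - 4 * α) := by
  have hp : -1 < -(4 * α) := by linarith
  have hba : 0 < b - a := by linarith
  have hEq : EqOn (fun u => (b - u) ^ (-(4 * α)) * ((b - a) ^ (-(4 * α)))⁻¹)
      (fun u => ((b - u) / (b - a)) ^ (-(4 * α))) (Ico a b) := fun u hu => by
    simp only
    rw [Real.div_rpow (by linarith [hu.2]) hba.le, div_eq_mul_inv]
  have hII := (rpow_rsub_integrable (u := b) (b := b) hp a).mul_const ((b - a) ^ (-(4 * α)))⁻¹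
  have h1 : IntegrableOn (fun u => ((b - u) / (b - a)) ^ (-(4 * α))) (Ico a b) volume := by
    refine IntegrableOn.congr_fun ?_ hEq measurableSet_Ico
    exact ((intervalIntegrable_iff_integrableOn_Ico_of_le hab.le).mp hII)
  have h2 := (integrable_indicator_iff measurableSet_Ico).mpr h1
  refine ⟨h2.integrableOn, ?_⟩
  refine (setIntegral_le_integral h2 (Filter.Eventually.of_forall fun u => ?_)).trans_eq ?_
  · refine indicator_nonneg (fun u hu => ?_) u
    exact Real.rpow_nonneg (div_nonneg (by linarith [hu.2]) hba.le) _
  · rw [integral_indicator measurableSet_Ico, ← setIntegral_congr_fun measurableSet_Ico hEq,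
      integral_Ico_eq_integral_Ioc, ← intervalIntegral.integral_of_le hab.le,
      intervalIntegral.integral_mul_const, integral_rpow_rsub hp, Real.rpow_add hba, Real.rpow_one]
    have : (b - a) ^ (-(4 * α)) ≠ 0 := (Real.rpow_pos_of_pos hba _).ne'
    have h4 : 1 - 4 * α ≠ 0 := by linarith
    have h5 : -(4 * α) + 1 ≠ 0 := by linarith
    field_simp
    ring

lemma W_int {T α : ℝ} (P : Partition T) (hα' : α < 1 / 4) :
    Integrable (W P α) (mu T) ∧ ∫ u, W P α u ∂(mu T) ≤ T / (1 - 4 * α) := by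
  have h : ∀ i ∈ Finset.range P.n, _ := fun i hi =>
    W_term T (P.lt i (Finset.mem_range.mp hi)) hα'
  refine ⟨integrable_finsetSum _ fun i hi => (h i hi).1, ?_⟩
  unfold W
  rw [integral_finsetSum _ fun i hi => (h i hi).1]
  refine (Finset.sum_le_sum fun i hi => (h i hi).2).trans_eq ?_
  rw [← Finset.sum_div, Finset.sum_range_sub, P.last, P.first, sub_zero]

lemma V_int {T α lam C κ : ℝ} (hT : 0 < T) (hα' : α < 1 / 4) :
    ∃ c : ℝ, 0 ≤ c ∧ ∀ P Q : Partition T,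
      Integrable (fun u => V0 T α lam C u + VP P α κ C u + VP Q α κ C u) (mu T) ∧
      ∫ u, (V0 T α lam C u + VP P α κ C u + VP Q α κ C u) ∂(mu T) ≤ c := by
  have hp : -1 < -(4 * α) := by linarith
  have i1 : Integrable (fun u : ℝ => u ^ (-(4 * α))) (mu T) :=
    int_mu hT.le (intervalIntegral.intervalIntegrable_rpow' hp)
  have i2 : Integrable (fun u : ℝ => (T - u) ^ (-(4 * α))) (mu T) :=
    int_mu hT.le (rpow_rsub_integrable hp 0)
  have i0 : Integrable (V0 T α lam C) (mu T) :=
    ((i1.add i2).add (integrable_const _)).const_mul _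
  have iP : ∀ P : Partition T, Integrable (VP P α κ C) (mu T) := fun P =>
    (((integrable_const _).add (W_int P hα').1).add i1).const_mul _
  have bP : ∀ P : Partition T, ∫ u, VP P α κ C u ∂(mu T) ≤
      C ^ 2 * ((∫ _u, 2 * (T ^ κ / κ) ^ 2 ∂(mu T)) + T / (1 - 4 * α) + ∫ u, u ^ (-(4 * α)) ∂(mu T)) := by
    intro P
    unfold VP
    have j1 : Integrable (fun u => 2 * (T ^ κ / κ) ^ 2 + W P α u) (mu T) :=
      (integrable_const _).add (W_int P hα').1
    rw [integral_const_mul, integral_add j1 i1,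
      integral_add (integrable_const _) (W_int P hα').1]
    have := (W_int P hα').2
    gcongr
  set B := C ^ 2 * ((∫ _u, 2 * (T ^ κ / κ) ^ 2 ∂(mu T)) + T / (1 - 4 * α) + ∫ u, u ^ (-(4 * α)) ∂(mu T))
  refine ⟨|(∫ u, V0 T α lam C u ∂(mu T)) + B + B|, abs_nonneg _, fun P Q =>
    ⟨(i0.add (iP P)).add (iP Q), ?_⟩⟩
  have j1 : Integrable (fun u => V0 T α lam C u + VP P α κ C u) (mu T) := i0.add (iP P)
  rw [integral_add j1 (iP Q), integral_add i0 (iP P)]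
  exact (add_le_add (add_le_add le_rfl (bP P)) (bP Q)).trans (le_abs_self _)

lemma SG_of_strong {T lam C : ℝ} {ψ : ℝ → ℝ → ℝ} (hT : 0 < T) (hlam : 0 < lam)
    (h : IsStrongHolderBiWith T lam C ψ) : ∃ M, 0 ≤ M ∧ SG T lam M ψ := by
  have hT0 : (0:ℝ) ∈ Icc 0 T := ⟨le_rfl, hT.le⟩
  obtain ⟨⟨h1, h2⟩, h3⟩ := h
  simp only [Real.norm_eq_abs] at h1 h2 h3
  set M := |ψ 0 0| + |C| * T ^ lam + |C| * T ^ lam + |C| with hM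
  have hC : C ≤ |C| := le_abs_self C
  have hTl : 0 ≤ |C| * T ^ lam := by positivity
  have hCM : |C| ≤ M := by have := abs_nonneg (ψ 0 0); linarith
  have hCM' : C ≤ M := hC.trans hCM
  have hle : ∀ x ∈ Icc 0 T, C * |x - 0| ^ lam ≤ |C| * T ^ lam := by
    intro x hx
    rw [sub_zero, abs_of_nonneg hx.1]
    have : x ^ lam ≤ T ^ lam := Real.rpow_le_rpow hx.1 hx.2 hlam.le
    exact mul_le_mul hC this (Real.rpow_nonneg hx.1 _) (abs_nonneg _)
  refine ⟨M, by positivity, fun y hy => ⟨fun x hx => ?_, fun x hx x' hx' => ?_⟩,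
    fun x hx y hy y' hy' => ?_, fun y hy y' hy' => ⟨fun x hx => ?_, fun x hx x' hx' => ?_⟩⟩
  · have a := (h1 0 hT0 x hx y hy).trans (hle x hx)
    have b := (h2 0 hT0 0 hT0 y hy).trans (hle y hy)
    have e : ψ x y = (ψ x y - ψ 0 y) + (ψ 0 y - ψ 0 0) + ψ 0 0 := by ring
    have c := abs_add_three (ψ x y - ψ 0 y) (ψ 0 y - ψ 0 0) (ψ 0 0)
    rw [← e] at c
    have := abs_nonneg C
    linarith
  · exact (h1 x' hx' x hx y hy).trans (mul_le_mul_of_nonneg_right hCM' (by positivity))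
  · exact (h2 x hx y' hy' y hy).trans (mul_le_mul_of_nonneg_right hCM' (by positivity))
  · exact (h2 x hx y' hy' y hy).trans (mul_le_mul_of_nonneg_right hCM' (by positivity))
  · have a := h3 x' hx' x hx y' hy' y hy
    have e : rectInc ψ x' x y' y = (ψ x y - ψ x y') - (ψ x' y - ψ x' y') := by
      rw [rectInc]; ring
    rw [e] at a
    refine a.trans ?_
    calc C * |x - x'| ^ lam * |y - y'| ^ lam = C * (|x - x'| ^ lam * |y - y'| ^ lam) := by ring
      _ ≤ M * (|x - x'| ^ lam * |y - y'| ^ lam) :=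
        mul_le_mul_of_nonneg_right hCM' (by positivity)
      _ = _ := by ring

lemma strong_of_weak {T lam C : ℝ} {ψ : ℝ → ℝ → ℝ} (hT : 0 < T) (hlam : 0 < lam)
    (h : IsHolderBiWith T lam C ψ) : ∃ C', IsStrongHolderBiWith T (lam / 2) C' ψ := by
  obtain ⟨h1, h2⟩ := h
  simp only [Real.norm_eq_abs] at h1 h2
  have hC : C ≤ |C| := le_abs_self C
  have hsq : ∀ x : ℝ, |x| ^ lam = (|x| ^ (lam / 2)) ^ 2 := fun x => by
    rw [← Real.rpow_natCast, ← Real.rpow_mul (abs_nonneg x)]; congr 1; push_cast; ring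
  have hdi : ∀ x ∈ Icc 0 T, ∀ y ∈ Icc 0 T, |x - y| ^ (lam / 2) ≤ T ^ (lam / 2) := by
    intro x hx y hy
    refine Real.rpow_le_rpow (abs_nonneg _) ?_ (by linarith)
    rw [abs_le]; constructor <;> linarith [hx.1, hx.2, hy.1, hy.2]
  set D := |C| * (T ^ (lam / 2) + 2) with hD
  have hx1 : ∀ x ∈ Icc 0 T, ∀ y ∈ Icc 0 T, C * |x - y| ^ lam ≤ D * |x - y| ^ (lam / 2) := by
    intro x hx y hy
    rw [hsq, hD]
    have a := hdi x hx y hy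
    have b : 0 ≤ |x - y| ^ (lam / 2) := by positivity
    set t := |x - y| ^ (lam / 2)
    have c1 : C * t ^ 2 ≤ |C| * t ^ 2 := mul_le_mul_of_nonneg_right hC (sq_nonneg _)
    have c2 : t ^ 2 ≤ (T ^ (lam / 2) + 2) * t := by nlinarith
    have c3 := mul_le_mul_of_nonneg_left c2 (abs_nonneg C)
    linarith
  refine ⟨D, ⟨fun u₁ hu₁ u₂ hu₂ v hv => ?_, fun u hu v₁ hv₁ v₂ hv₂ => ?_⟩,
    fun u₁ hu₁ u₂ hu₂ v₁ hv₁ v₂ hv₂ => ?_⟩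
  · exact (h1 u₁ hu₁ u₂ hu₂ v hv).trans (hx1 _ hu₂ _ hu₁)
  · exact (h2 u hu v₁ hv₁ v₂ hv₂).trans (hx1 _ hv₂ _ hv₁)
  · have a1 := h1 u₁ hu₁ u₂ hu₂ v₁ hv₁
    have a2 := h1 u₁ hu₁ u₂ hu₂ v₂ hv₂
    have b1 := h2 u₁ hu₁ v₁ hv₁ v₂ hv₂
    have b2 := h2 u₂ hu₂ v₁ hv₁ v₂ hv₂
    rw [hsq] at a1 a2 b1 b2
    rw [Real.norm_eq_abs]
    set s := |u₂ - u₁| ^ (lam / 2) with hs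
    set t := |v₂ - v₁| ^ (lam / 2) with ht
    have hs0 : 0 ≤ s := by positivity
    have ht0 : 0 ≤ t := by positivity
    have cs : C * s ^ 2 ≤ |C| * s ^ 2 := mul_le_mul_of_nonneg_right hC (sq_nonneg _)
    have ct : C * t ^ 2 ≤ |C| * t ^ 2 := mul_le_mul_of_nonneg_right hC (sq_nonneg _)
    have r1 : |rectInc ψ u₁ u₂ v₁ v₂| ≤ 2 * |C| * s ^ 2 := by
      have e : rectInc ψ u₁ u₂ v₁ v₂ = (ψ u₂ v₂ - ψ u₁ v₂) - (ψ u₂ v₁ - ψ u₁ v₁) := by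
        rw [rectInc]; ring
      rw [e]
      refine (abs_sub _ _).trans ?_
      linarith
    have r2 : |rectInc ψ u₁ u₂ v₁ v₂| ≤ 2 * |C| * t ^ 2 := by
      have e : rectInc ψ u₁ u₂ v₁ v₂ = (ψ u₂ v₂ - ψ u₂ v₁) - (ψ u₁ v₂ - ψ u₁ v₁) := by
        rw [rectInc]; ring
      rw [e]
      refine (abs_sub _ _).trans ?_
      linarith
    have r3 : |rectInc ψ u₁ u₂ v₁ v₂| ≤ 2 * |C| * (s * t) := by
      rcases le_total s t with hst | hst
      · refine r1.trans (mul_le_mul_of_nonneg_left ?_ (by positivity))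
        nlinarith
      · refine r2.trans (mul_le_mul_of_nonneg_left ?_ (by positivity))
        nlinarith
    refine r3.trans ?_
    have : 2 * |C| ≤ D := by
      have : 0 ≤ |C| * T ^ (lam / 2) := by positivity
      rw [hD]; linarith
    calc _ ≤ D * (s * t) := mul_le_mul_of_nonneg_right this (by positivity)
      _ = _ := by ring

lemma V0_nonneg {T α lam C u : ℝ} (hu : u ∈ Ioo 0 T) : 0 ≤ V0 T α lam C u := by
  have h1 : 0 ≤ u ^ (-(4 * α)) := Real.rpow_nonneg hu.1.le _
  have h2 : 0 ≤ (T - u) ^ (-(4 * α)) := Real.rpow_nonneg (by linarith [hu.2]) _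
  unfold V0; positivity

lemma VP_nonneg {T α κ C u : ℝ} (P : Partition T) (hu : u ∈ Ioo 0 T) : 0 ≤ VP P α κ C u := by
  have h1 : 0 ≤ u ^ (-(4 * α)) := Real.rpow_nonneg hu.1.le _
  have h2 := W_nonneg P α u
  unfold VP; positivity

lemma prod_diff {F₁ F₂ G₁ G₂ X M₁ M₂ e : ℝ} (hX : 0 ≤ X) (hM₁ : 0 ≤ M₁) (hM₂ : 0 ≤ M₂)
    (he : 0 ≤ e) (he1 : e ≤ 1) (g1 : |G₁| ≤ M₁ * X) (g2 : |G₂| ≤ M₂ * X)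
    (d1 : |G₁ - F₁| ≤ 3 * e * M₁ * X) (d2 : |G₂ - F₂| ≤ 3 * e * M₂ * X) :
    |F₁ * F₂ - G₁ * G₂| ≤ 15 * M₁ * M₂ * e * X ^ 2 := by
  have hf : |F₂| ≤ 4 * M₂ * X := by
    have h : F₂ = G₂ - (G₂ - F₂) := by ring
    have h2 : |F₂| ≤ |G₂| + |G₂ - F₂| := by
      conv_lhs => rw [h]
      exact abs_sub _ _
    have : e * (M₂ * X) ≤ 1 * (M₂ * X) := mul_le_mul_of_nonneg_right he1 (by positivity)
    nlinarith
  have h : F₁ * F₂ - G₁ * G₂ = -((G₁ - F₁) * F₂ + G₁ * (G₂ - F₂)) := by ring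
  rw [h, abs_neg]
  refine (abs_add_le _ _).trans ?_
  rw [abs_mul, abs_mul]
  calc _ ≤ (3 * e * M₁ * X) * (4 * M₂ * X) + (M₁ * X) * (3 * e * M₂ * X) := by gcongr
    _ = _ := by ring

lemma main_strong {T α lam : ℝ} (hT : 0 < T) (hα : 0 ≤ α) (hα' : α < 1 / 4)
    {K K' : ℝ → ℝ → ℝ} (hK : IsVolterraKernel K) (hA : ∃ C : ℝ, CondA T α C K K')
    {ψ₁ ψ₂ : ℝ → ℝ → ℝ} (h1 : IsStrongHolderBi T lam ψ₁) (h2 : IsStrongHolderBi T lam ψ₂)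
    (hl : α < lam) :
    ∀ ε > 0, ∃ δ > 0, ∀ P₁ P₂ Q₁ Q₂ : Partition T,
      max (max P₁.mesh P₂.mesh) (max Q₁.mesh Q₂.mesh) < δ →
      |(∑ i ∈ Finset.range P₁.n, ∑ j ∈ Finset.range P₂.n, ∑ k ∈ Finset.range Q₁.n,
          ∑ l ∈ Finset.range Q₂.n,
          ψ₁ (P₁.pts i) (P₂.pts j) * ψ₂ (Q₁.pts k) (Q₂.pts l) *
            rectInc (covR K) (P₁.pts i) (P₁.pts (i + 1)) (Q₁.pts k) (Q₁.pts (k + 1)) *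
            rectInc (covR K) (P₂.pts j) (P₂.pts (j + 1)) (Q₂.pts l) (Q₂.pts (l + 1))) -
        ∫ r₁ in (0:ℝ)..T, ∫ r₂ in (0:ℝ)..T,
          KstarT T K K' ψ₁ r₁ r₂ * KstarT T K K' ψ₂ r₁ r₂| < ε := by
  obtain ⟨C, hA⟩ := hA
  have hC : 0 ≤ C := by
    have h := (hA.2 (T / 2) T (by linarith) (by linarith) le_rfl).2
    have h' := (abs_nonneg _).trans h
    have hp : 0 < (T - T / 2) ^ (-(α + 1)) := Real.rpow_pos_of_pos (by linarith) _
    exact nonneg_of_mul_nonneg_left h' hp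
  obtain ⟨C₁, h1⟩ := h1
  obtain ⟨C₂, h2⟩ := h2
  obtain ⟨M₁, hM₁, s1⟩ := SG_of_strong hT (by linarith) h1
  obtain ⟨M₂, hM₂, s2⟩ := SG_of_strong hT (by linarith) h2
  obtain ⟨κ, hκ, hlam⟩ : ∃ κ, 0 < κ ∧ lam = α + 2 * κ := ⟨(lam - α) / 2, by linarith, by ring⟩
  obtain ⟨c, hc, hV⟩ := V_int (lam := lam) (C := C) (κ := κ) hT hα'
  intro ε hε
  set D := 15 * M₁ * M₂ * (c * c) with hD
  have hD0 : 0 ≤ D := by positivity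
  have hq : 0 < ε / (D + 1) := by positivity
  refine ⟨min 1 ((ε / (D + 1)) ^ (κ⁻¹)), lt_min one_pos (Real.rpow_pos_of_pos hq _), ?_⟩
  intro P₁ P₂ Q₁ Q₂ hmesh
  set m := max (max P₁.mesh P₂.mesh) (max Q₁.mesh Q₂.mesh) with hm
  have p1 : P₁.mesh ≤ m := (le_max_left _ _).trans (le_max_left _ _)
  have p2 : P₂.mesh ≤ m := (le_max_right _ _).trans (le_max_left _ _)
  have q1 : Q₁.mesh ≤ m := (le_max_left _ _).trans (le_max_right _ _)
  have q2 : Q₂.mesh ≤ m := (le_max_right _ _).trans (le_max_right _ _)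
  have hm0 : 0 < m := lt_of_lt_of_le P₁.mesh_pos p1
  have hm1 : m ≤ 1 := (hmesh.trans_le (min_le_left _ _)).le
  have hmκ : m ^ κ < ε / (D + 1) := by
    have := Real.rpow_lt_rpow hm0.le (hmesh.trans_le (min_le_right _ _)) hκ
    rwa [← Real.rpow_mul hq.le, inv_mul_cancel₀ hκ.ne', Real.rpow_one] at this
  have hmκ0 : 0 ≤ m ^ κ := by positivity
  have hmκ1 : m ^ κ ≤ 1 := Real.rpow_le_one hm0.le hm1 hκ.le
  obtain ⟨hFI, hF⟩ := sum_eq hT hα' hC hK hA ψ₁ ψ₂ P₁ P₂ Q₁ Q₂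
  obtain ⟨iA, bA⟩ := hV P₁ Q₁
  obtain ⟨iB, bB⟩ := hV P₂ Q₂
  set VA : ℝ → ℝ := fun u => V0 T α lam C u + VP P₁ α κ C u + VP Q₁ α κ C u with hVA
  set VB : ℝ → ℝ := fun u => V0 T α lam C u + VP P₂ α κ C u + VP Q₂ α κ C u with hVB
  have nA : ∀ u ∈ Ioo 0 T, V0 T α lam C u ≤ VA u ∧ VP P₁ α κ C u ≤ VA u ∧ VP Q₁ α κ C u ≤ VA u ∧
      0 ≤ VA u := by
    intro u hu
    have a := V0_nonneg (α := α) (lam := lam) (C := C) hu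
    have b := VP_nonneg (α := α) (κ := κ) (C := C) P₁ hu
    have d := VP_nonneg (α := α) (κ := κ) (C := C) Q₁ hu
    simp only [hVA]
    refine ⟨?_, ?_, ?_, ?_⟩ <;> linarith
  have nB : ∀ u ∈ Ioo 0 T, V0 T α lam C u ≤ VB u ∧ VP P₂ α κ C u ≤ VB u ∧ VP Q₂ α κ C u ≤ VB u ∧
      0 ≤ VB u := by
    intro u hu
    have a := V0_nonneg (α := α) (lam := lam) (C := C) hu
    have b := VP_nonneg (α := α) (κ := κ) (C := C) P₂ hu
    have d := VP_nonneg (α := α) (κ := κ) (C := C) Q₂ hu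
    simp only [hVB]
    refine ⟨?_, ?_, ?_, ?_⟩ <;> linarith
  have w1 := fun u (hu : u ∈ Ioo 0 T) v (hv : v ∈ Ioo 0 T) =>
    main_pointwise hC hK hA hα hκ hlam hM₁ s1 hu hv P₁ P₂ p1 p2 hm1
      (nA u hu).1 (nA u hu).2.1 (nB v hv).1 (nB v hv).2.1
  have w2 := fun u (hu : u ∈ Ioo 0 T) v (hv : v ∈ Ioo 0 T) =>
    main_pointwise hC hK hA hα hκ hlam hM₂ s2 hu hv Q₁ Q₂ q1 q2 hm1
      (nA u hu).1 (nA u hu).2.2.1 (nB v hv).1 (nB v hv).2.2.1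
  have ms1 := KstarT_meas hT (by linarith) hK hA s1 (fun u hu v hv => (w1 u hu v hv).1)
  have ms2 := KstarT_meas hT (by linarith) hK hA s2 (fun u hu v hv => (w2 u hu v hv).1)
  have iAB : Integrable (fun z : ℝ × ℝ => VA z.1 * VB z.2) ((mu T).prod (mu T)) := iA.mul_prod iB
  have hae : ∀ᵐ z ∂((mu T).prod (mu T)), z.1 ∈ Ioo 0 T ∧ z.2 ∈ Ioo 0 T := by
    rw [Measure.prod_restrict]
    filter_upwards [ae_restrict_mem (measurableSet_Ioo.prod measurableSet_Ioo)] with z hz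
    exact hz
  have hsq : ∀ z : ℝ × ℝ, z.1 ∈ Ioo 0 T → z.2 ∈ Ioo 0 T →
      (√(VA z.1) * √(VB z.2)) ^ 2 = VA z.1 * VB z.2 := by
    intro z hz1 hz2
    rw [mul_pow, Real.sq_sqrt (nA _ hz1).2.2.2, Real.sq_sqrt (nB _ hz2).2.2.2]
  have hGI : Integrable (fun z : ℝ × ℝ => KstarT T K K' ψ₁ z.1 z.2 * KstarT T K K' ψ₂ z.1 z.2)
      ((mu T).prod (mu T)) := by
    refine (iAB.const_mul (M₁ * M₂)).mono' (ms1.mul ms2) ?_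
    filter_upwards [hae] with z hz
    rw [Real.norm_eq_abs, abs_mul, ← hsq z hz.1 hz.2]
    calc _ ≤ (M₁ * (√(VA z.1) * √(VB z.2))) * (M₂ * (√(VA z.1) * √(VB z.2))) :=
          mul_le_mul (w1 _ hz.1 _ hz.2).2.1 (w2 _ hz.1 _ hz.2).2.1 (abs_nonneg _) (by positivity)
      _ = _ := by ring
  have hG : ∫ r₁ in (0:ℝ)..T, ∫ r₂ in (0:ℝ)..T,
      KstarT T K K' ψ₁ r₁ r₂ * KstarT T K K' ψ₂ r₁ r₂ =
      ∫ z : ℝ × ℝ, KstarT T K K' ψ₁ z.1 z.2 * KstarT T K K' ψ₂ z.1 z.2 ∂((mu T).prod (mu T)) := by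
    rw [integral_prod _ hGI]
    simp only [intervalIntegral.integral_of_le hT.le, integral_Ioc_eq_integral_Ioo]
  rw [hF, hG, ← integral_sub hFI hGI, ← Real.norm_eq_abs]
  have hbd := norm_integral_le_of_norm_le (iAB.const_mul (15 * M₁ * M₂ * m ^ κ))
    (f := fun z : ℝ × ℝ => Lsum P₂ K (fun y => Lsum P₁ K (fun x => ψ₁ x y) z.1) z.2 *
      Lsum Q₂ K (fun y => Lsum Q₁ K (fun x => ψ₂ x y) z.1) z.2 -
      KstarT T K K' ψ₁ z.1 z.2 * KstarT T K K' ψ₂ z.1 z.2) (by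
    filter_upwards [hae] with z hz
    rw [Real.norm_eq_abs, ← hsq z hz.1 hz.2]
    have a := w1 _ hz.1 _ hz.2
    have b := w2 _ hz.1 _ hz.2
    exact prod_diff (by positivity) hM₁ hM₂ hmκ0 hmκ1 a.2.1 b.2.1 a.2.2 b.2.2)
  refine hbd.trans_lt ?_
  rw [integral_const_mul, integral_prod_mul VA VB]
  have nIB : 0 ≤ ∫ v, VB v ∂(mu T) := by
    refine integral_nonneg_of_ae ?_
    filter_upwards [ae_restrict_mem measurableSet_Ioo] with v hv
    exact (nB v hv).2.2.2
  have hcc : (∫ u, VA u ∂(mu T)) * (∫ v, VB v ∂(mu T)) ≤ c * c := mul_le_mul bA bB nIB hc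
  calc _ ≤ 15 * M₁ * M₂ * m ^ κ * (c * c) := mul_le_mul_of_nonneg_left hcc (by positivity)
    _ = D * m ^ κ := by rw [hD]; ring
    _ ≤ D * (ε / (D + 1)) := mul_le_mul_of_nonneg_left hmκ.le hD0
    _ < ε := by
      rw [mul_div_assoc', div_lt_iff₀ (by linarith)]
      nlinarith

/-- Proposition 4.4: convergence of the iterated 2D Young–Stieltjes
sums to `∫_{[0,T]²} (𝒦*⊗𝒦*)ψ₁ · (𝒦*⊗𝒦*)ψ₂`. -/
theorem iterated_youngIntegral_covR (T α lam : ℝ) (hT : 0 < T) (hα : 0 ≤ α) (hα' : α < 1 / 4)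
    (K K' : ℝ → ℝ → ℝ) (hK : IsVolterraKernel K) (hA : ∃ C : ℝ, CondA T α C K K')
    (ψ₁ ψ₂ : ℝ → ℝ → ℝ) (hlam : 0 < lam) (hlam' : lam ≤ 1)
    (hψ : (IsStrongHolderBi T lam ψ₁ ∧ IsStrongHolderBi T lam ψ₂ ∧ α < lam) ∨
          (IsHolderBi T lam ψ₁ ∧ IsHolderBi T lam ψ₂ ∧ 2 * α < lam)) :
    ∀ ε > 0, ∃ δ > 0, ∀ P₁ P₂ Q₁ Q₂ : Partition T,
      max (max P₁.mesh P₂.mesh) (max Q₁.mesh Q₂.mesh) < δ →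
      |(∑ i ∈ Finset.range P₁.n, ∑ j ∈ Finset.range P₂.n, ∑ k ∈ Finset.range Q₁.n,
          ∑ l ∈ Finset.range Q₂.n,
          ψ₁ (P₁.pts i) (P₂.pts j) * ψ₂ (Q₁.pts k) (Q₂.pts l) *
            rectInc (covR K) (P₁.pts i) (P₁.pts (i + 1)) (Q₁.pts k) (Q₁.pts (k + 1)) *
            rectInc (covR K) (P₂.pts j) (P₂.pts (j + 1)) (Q₂.pts l) (Q₂.pts (l + 1))) -
        ∫ r₁ in (0:ℝ)..T, ∫ r₂ in (0:ℝ)..T,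
          KstarT T K K' ψ₁ r₁ r₂ * KstarT T K K' ψ₂ r₁ r₂| < ε := by
  rcases hψ with ⟨h1, h2, h3⟩ | ⟨⟨C₁, h1⟩, ⟨C₂, h2⟩, h3⟩
  · exact main_strong hT hα hα' hK hA h1 h2 h3
  · exact main_strong hT hα hα' hK hA (strong_of_weak hT hlam h1) (strong_of_weak hT hlam h2)
      (by linarith)

end YS
end
end

section
/- Let E be a Banach space, T > 0, and let K be a Volterra kernel on [0,T] satisfying Condition (A) with exponent α ∈ [0, 1/4). Let ψ: [0,T]² → E be strongly λ-Hölder bi-continuous with λ > α. For s ∈ (0,T) define g_s: [0,T] → E by g_s(t) := K*(ψ(·,t))(s) = ψ(s,t) K(T,s) + ∫_s^T [ψ(r,t) − ψ(s,t)] (∂K(r,s)/∂r) dr. Then for all (s,t) ∈ (0,T)², K*(g_s)(t) = (K*⊗K*)ψ(s,t); i.e., the operator K*⊗K* coincides with the iterated application of K* in the first and then the second variable. -/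
open MeasureTheory Set

noncomputable section

namespace YS

variable {E : Type*} [NormedAddCommGroup E] [NormedSpace ℝ E]

theorem aux_int {T α lam CK C : ℝ} {K K' : ℝ → ℝ → ℝ} (hA : CondA T α CK K K')
    (hαlam : α < lam) (hlam : 0 < lam) {φ : ℝ → E}
    (hφ : IsHolderWith T lam C φ) {s : ℝ} (hs : s ∈ Ioo (0:ℝ) T) :
    IntervalIntegrable (fun r => K' r s • (φ r - φ s)) volume s T ∧
      ‖AK T K' φ s‖ ≤ C * (CK * ∫ r in s..T, (r - s) ^ (lam - α - 1)) := by
  have hsT := hs.2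
  have hcont : ContinuousOn φ (Icc (0:ℝ) T) := by
    intro x hx
    rw [ContinuousWithinAt, tendsto_iff_norm_sub_tendsto_zero]
    have h0 : Filter.Tendsto (fun y : ℝ => C * |y - x| ^ lam) (nhdsWithin x (Icc 0 T))
        (nhds 0) := by
      have : ContinuousAt (fun y : ℝ => C * |y - x| ^ lam) x := by
        apply ContinuousAt.mul continuousAt_const
        apply ContinuousAt.rpow_const _ (Or.inr hlam.le)
        fun_prop
      have h2 := this.tendsto
      simp only [sub_self, abs_zero, Real.zero_rpow hlam.ne', mul_zero] at h2
      exact h2.mono_left nhdsWithin_le_nhds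
    refine squeeze_zero' (Filter.Eventually.of_forall fun _ => norm_nonneg _) ?_ h0
    filter_upwards [self_mem_nhdsWithin] with y hy
    exact hφ y hy x hx
  have hbd : ∀ r ∈ Ioc s T, ‖K' r s • (φ r - φ s)‖ ≤ C * (CK * (r - s) ^ (lam - α - 1)) := by
    intro r hr
    have hpos : 0 < r - s := sub_pos.2 hr.1
    have h1 := (hA.2 s r hs.1 hr.1 hr.2).2
    have h2 := hφ r ⟨(hs.1.trans hr.1).le, hr.2⟩ s ⟨hs.1.le, hs.2.le⟩
    rw [abs_of_pos hpos] at h2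
    rw [norm_smul, Real.norm_eq_abs]
    calc |K' r s| * ‖φ r - φ s‖ ≤ (CK * (r - s) ^ (-(α + 1))) * (C * (r - s) ^ lam) :=
          mul_le_mul h1 h2 (norm_nonneg _) ((abs_nonneg _).trans h1)
      _ = C * (CK * ((r - s) ^ lam * (r - s) ^ (-(α + 1)))) := by ring
      _ = _ := by rw [← Real.rpow_add hpos]; ring_nf
  have hmeas : AEStronglyMeasurable (fun r => K' r s • (φ r - φ s))
      (volume.restrict (Ioc s T)) := by
    refine AEStronglyMeasurable.smul (f := fun r => K' r s) (g := fun r => φ r - φ s) ?_ ?_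
    · refine ((measurable_deriv (fun r => K r s)).aestronglyMeasurable).congr ?_
      filter_upwards [ae_restrict_mem measurableSet_Ioc] with r hr
      exact (hA.2 s r hs.1 hr.1 hr.2).1.deriv
    · refine ContinuousOn.aestronglyMeasurable ?_ measurableSet_Ioc
      refine (hcont.mono ?_).sub continuousOn_const
      intro r hr
      exact ⟨(hs.1.trans hr.1).le, hr.2⟩
  have hbi : IntervalIntegrable (fun r => C * (CK * (r - s) ^ (lam - α - 1))) volume s T := by
    have h := (intervalIntegral.intervalIntegrable_rpow' (a := 0) (b := T - s)
      (r := lam - α - 1) (by linarith)).comp_sub_right s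
    simp only [zero_add, sub_add_cancel] at h
    exact (h.const_mul CK).const_mul C
  refine ⟨?_, ?_⟩
  · rw [intervalIntegrable_iff_integrableOn_Ioc_of_le hsT.le] at hbi ⊢
    refine Integrable.mono' hbi hmeas ?_
    filter_upwards [ae_restrict_mem measurableSet_Ioc] with r hr
    exact hbd r hr
  · rw [AK, ← intervalIntegral.integral_const_mul, ← intervalIntegral.integral_const_mul]
    exact intervalIntegral.norm_integral_le_of_norm_le hsT.le
      (Filter.Eventually.of_forall hbd) hbi

/-- Lemma 3.2: the operator `𝒦* ⊗ 𝒦*` coincides with the iterated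
application of `𝒦*`, first in the first and then in the second variable. -/
theorem kstar_iterated_eq_kstarT {E : Type*} [NormedAddCommGroup E] [NormedSpace ℝ E]
    [CompleteSpace E] (T α lam : ℝ) (hT : 0 < T) (hα : 0 ≤ α) (hα' : α < 1 / 4)
    (K K' : ℝ → ℝ → ℝ) (hK : IsVolterraKernel K) (hA : ∃ C : ℝ, CondA T α C K K')
    (ψ : ℝ → ℝ → E) (hlam : 0 < lam) (hlam' : lam ≤ 1)
    (hψ : IsStrongHolderBi T lam ψ) (hαlam : α < lam) :
    ∀ s ∈ Ioo (0:ℝ) T, ∀ t ∈ Ioo (0:ℝ) T,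
      Kstar T K K' (fun t' => Kstar T K K' (fun r => ψ r t') s) t =
        KstarT T K K' ψ s t := by
  obtain ⟨CK, hA⟩ := hA
  obtain ⟨C, ⟨h1, h2⟩, h3⟩ := hψ
  intro s hs t ht
  have hsI : s ∈ Icc (0:ℝ) T := ⟨hs.1.le, hs.2.le⟩
  have htI : t ∈ Icc (0:ℝ) T := ⟨ht.1.le, ht.2.le⟩
  set G : ℝ → E := fun t' => AK T K' (fun r => ψ r t') s with hG
  set M := CK * ∫ r in s..T, (r - s) ^ (lam - α - 1) with hM
  have hi : ∀ t' ∈ Icc (0:ℝ) T,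
      IntervalIntegrable (fun r => K' r s • (ψ r t' - ψ s t')) volume s T := by
    intro t' ht'
    exact (aux_int hA hαlam hlam (φ := fun r => ψ r t') (C := C)
      (fun a ha b hb => h1 b hb a ha t' ht') hs).1
  have hGd : ∀ t₁ ∈ Icc (0:ℝ) T, ∀ t₂ ∈ Icc (0:ℝ) T,
      G t₁ - G t₂ = AK T K' (fun r => ψ r t₁ - ψ r t₂) s := by
    intro a ha b hb
    simp only [hG, AK]
    rw [← intervalIntegral.integral_sub (hi a ha) (hi b hb)]
    congr 1
    ext r
    rw [← smul_sub]
    congr 1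
    abel
  have hGH : IsHolderWith T lam (C * M) G := by
    intro a ha b hb
    rw [hGd a ha b hb]
    refine ((aux_int hA hαlam hlam (φ := fun r => ψ r a - ψ r b) (C := C * |a - b| ^ lam)
      ?_ hs).2).trans_eq (by rw [hM]; ring)
    intro x hx y hy
    have := h3 y hy x hx b hb a ha
    have e : ψ x a - ψ x b - (ψ y a - ψ y b) = rectInc ψ y x b a := by
      simp only [rectInc]; abel
    rw [e]
    exact this.trans_eq (by ring)
  have hI1 : IntervalIntegrable (fun r => K' r t • (ψ s r - ψ s t)) volume t T :=
    (aux_int hA hαlam hlam (φ := fun r => ψ s r) (C := C)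
      (fun a ha b hb => h2 s hsI b hb a ha) ht).1
  have hI2 := (aux_int hA hαlam hlam hGH ht).1
  have hB : BK T K' ψ s t = ∫ r in t..T, K' r t • (G r - G t) := by
    rw [BK]
    refine intervalIntegral.integral_congr fun r hr => ?_
    rw [uIcc_of_le ht.2.le] at hr
    have hrI : r ∈ Icc (0:ℝ) T := ⟨ht.1.le.trans hr.1, hr.2⟩
    rw [hGd r hrI t htI, AK, ← intervalIntegral.integral_smul]
    congr 1
    ext x
    rw [smul_smul, mul_comm (K' r t)]
    congr 1
    simp only [rectInc]; abel
  have hL : (∫ r in t..T, K' r t • ((K T s • ψ s r + G r) - (K T s • ψ s t + G t))) =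
      K T s • (∫ r in t..T, K' r t • (ψ s r - ψ s t)) +
        ∫ r in t..T, K' r t • (G r - G t) := by
    have hI1' : IntervalIntegrable (fun r => K T s • K' r t • (ψ s r - ψ s t)) volume t T :=
      hI1.smul (K T s)
    rw [← intervalIntegral.integral_smul, ← intervalIntegral.integral_add hI1' hI2]
    congr 1
    ext r
    module
  change K T t • (K T s • ψ s t + G t) +
    (∫ r in t..T, K' r t • ((K T s • ψ s r + G r) - (K T s • ψ s t + G t))) = _
  rw [hL, KstarT, hB, smul_add, smul_smul, mul_comm (K T t)]
  simp only [AK, hG]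
  abel

end YS
end
end

section
/- Let E be a Banach space, T > 0, and 0 < λ ≤ 1. If φ: [0,T]² → E is λ-Hölder bi-continuous, then φ is strongly (λ/2)-Hölder bi-continuous. -/
open MeasureTheory Set

noncomputable section

namespace YS

variable {E : Type*} [NormedAddCommGroup E] [NormedSpace ℝ E]

/-- Lemma 3.5: a `λ`-Hölder bi-continuous function is strongly
`λ/2`-Hölder bi-continuous. -/
theorem isStrongHolderBi_of_isHolderBi {E : Type*} [NormedAddCommGroup E] [NormedSpace ℝ E]
    [CompleteSpace E] (T lam : ℝ) (hT : 0 < T) (hlam : 0 < lam) (hlam' : lam ≤ 1)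
    (φ : ℝ → ℝ → E) (hφ : IsHolderBi T lam φ) :
    IsStrongHolderBi T (lam / 2) φ := by
  obtain ⟨C, h1, h2⟩ := hφ
  have hsq : ∀ x : ℝ, |x| ^ lam = |x| ^ (lam / 2) * |x| ^ (lam / 2) := by
    intro x
    rw [← Real.rpow_add_of_nonneg (abs_nonneg x) (by linarith) (by linarith), add_halves]
  have hM0 : 0 ≤ T ^ (lam / 2) := Real.rpow_nonneg hT.le _
  have ha0 : ∀ x : ℝ, 0 ≤ |x| ^ (lam / 2) := fun x => Real.rpow_nonneg (abs_nonneg x) _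
  have hM : ∀ x ∈ Icc (0:ℝ) T, ∀ y ∈ Icc (0:ℝ) T, |y - x| ^ (lam / 2) ≤ T ^ (lam / 2) := by
    intro x hx y hy
    refine Real.rpow_le_rpow (abs_nonneg _) ?_ (by linarith)
    rw [abs_le]
    constructor <;> linarith [hx.1, hx.2, hy.1, hy.2]
  have hD0 : 0 ≤ max C 0 := le_max_right _ _
  have hCD : ∀ x : ℝ, C * |x| ^ lam ≤ max C 0 * (|x| ^ (lam / 2) * |x| ^ (lam / 2)) := by
    intro x
    rw [hsq]
    exact mul_le_mul_of_nonneg_right (le_max_left _ _) (mul_nonneg (ha0 x) (ha0 x))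
  generalize max C 0 = D at hD0 hCD
  generalize T ^ (lam / 2) = M at hM0 hM
  have key : ∀ a : ℝ, 0 ≤ a → a ≤ M → D * (a * a) ≤ (2 * D + D * M) * a := by
    intro a h0 hle
    have e1 : 0 ≤ D * a * (M - a) := mul_nonneg (mul_nonneg hD0 h0) (by linarith)
    have e2 : 0 ≤ D * a := mul_nonneg hD0 h0
    nlinarith
  refine ⟨2 * D + D * M, ⟨?_, ?_⟩, ?_⟩
  · intro u₁ hu₁ u₂ hu₂ v hv
    exact (h1 u₁ hu₁ u₂ hu₂ v hv).trans ((hCD _).trans (key _ (ha0 _) (hM _ hu₁ _ hu₂)))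
  · intro u hu v₁ hv₁ v₂ hv₂
    exact (h2 u hu v₁ hv₁ v₂ hv₂).trans ((hCD _).trans (key _ (ha0 _) (hM _ hv₁ _ hv₂)))
  · intro u₁ hu₁ u₂ hu₂ v₁ hv₁ v₂ hv₂
    have e1 : ‖rectInc φ u₁ u₂ v₁ v₂‖ ≤ 2 * (D * (|u₂ - u₁| ^ (lam / 2) * |u₂ - u₁| ^ (lam / 2))) := by
      have : rectInc φ u₁ u₂ v₁ v₂ = (φ u₂ v₂ - φ u₁ v₂) - (φ u₂ v₁ - φ u₁ v₁) := by
        unfold rectInc; abel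
      rw [this]
      linarith [norm_sub_le (φ u₂ v₂ - φ u₁ v₂) (φ u₂ v₁ - φ u₁ v₁), hCD (u₂ - u₁),
        h1 u₁ hu₁ u₂ hu₂ v₁ hv₁, h1 u₁ hu₁ u₂ hu₂ v₂ hv₂]
    have e2 : ‖rectInc φ u₁ u₂ v₁ v₂‖ ≤ 2 * (D * (|v₂ - v₁| ^ (lam / 2) * |v₂ - v₁| ^ (lam / 2))) := by
      have : rectInc φ u₁ u₂ v₁ v₂ = (φ u₂ v₂ - φ u₂ v₁) - (φ u₁ v₂ - φ u₁ v₁) := by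
        unfold rectInc; abel
      rw [this]
      linarith [norm_sub_le (φ u₂ v₂ - φ u₂ v₁) (φ u₁ v₂ - φ u₁ v₁), hCD (v₂ - v₁),
        h2 u₁ hu₁ v₁ hv₁ v₂ hv₂, h2 u₂ hu₂ v₁ hv₁ v₂ hv₂]
    have ha := ha0 (u₂ - u₁)
    have hb := ha0 (v₂ - v₁)
    generalize |u₂ - u₁| ^ (lam / 2) = a at *
    generalize |v₂ - v₁| ^ (lam / 2) = b at *
    have e3 : 0 ≤ D * M * (a * b) := mul_nonneg (mul_nonneg hD0 hM0) (mul_nonneg ha hb)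
    have e4 : ‖rectInc φ u₁ u₂ v₁ v₂‖ ≤ 2 * (D * (a * b)) := by
      rcases le_total a b with h | h
      · exact e1.trans (by gcongr)
      · exact e2.trans (by gcongr)
    linarith

end YS
end
end

section
/- Let E be a Banach space, T > 0, and let K be a Volterra kernel on [0,T] satisfying Condition (A) with exponent α ∈ [0, 1/4). If ψ: [0,T]² → E is strongly λ-Hölder bi-continuous with λ > α, then ∫_{[0,T]²} ‖(K*⊗K*)ψ(u,v)‖_E⁴ du dv < ∞ and ∫_0^T ‖(K*⊗K*)ψ(r,r)‖_E² dr < ∞. -/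
open MeasureTheory Set

noncomputable section

namespace YS

variable {E : Type*} [NormedAddCommGroup E] [NormedSpace ℝ E]

lemma aux_int_s10 {E : Type*} [NormedAddCommGroup E] [NormedSpace ℝ E]
    (T δ c s : ℝ) (hδ : 0 < δ) (hc : 0 ≤ c) (hs : 0 ≤ s) (hsT : s ≤ T) (F : ℝ → E)
    (hF : ∀ r ∈ Ioc s T, ‖F r‖ ≤ c * (r - s) ^ (δ - 1)) :
    ‖∫ r in s..T, F r‖ ≤ c * (T ^ δ / δ) := by
  have hint : IntervalIntegrable (fun r : ℝ => c * (r - s) ^ (δ - 1)) volume s T := by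
    apply IntervalIntegrable.const_mul
    have h := (intervalIntegral.intervalIntegrable_rpow' (a := 0) (b := T - s)
      (show -1 < δ - 1 by linarith)).comp_sub_right s
    simpa using h
  have h1 := intervalIntegral.norm_integral_le_of_norm_le hsT
    (Filter.Eventually.of_forall hF) hint
  refine h1.trans ?_
  rw [intervalIntegral.integral_const_mul,
    intervalIntegral.integral_comp_sub_right (fun x : ℝ => x ^ (δ - 1)) s,
    integral_rpow (Or.inl (by linarith))]
  have e : δ - 1 + 1 = δ := by ring
  rw [e, sub_self, Real.zero_rpow hδ.ne', sub_zero]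
  have : (T - s) ^ δ ≤ T ^ δ := Real.rpow_le_rpow (by linarith) (by linarith) hδ.le
  gcongr

lemma aux_k (T α u : ℝ) (hα : 0 ≤ α) (h0 : 0 < u) (hu : u < T) :
    u ^ (-α) * (T - u) ^ (-α) ≤ (T / 2) ^ (-α) * (u ^ (-α) + (T - u) ^ (-α)) := by
  have hT : 0 < T / 2 := by linarith
  have p1 : 0 ≤ u ^ (-α) := Real.rpow_nonneg h0.le _
  have p2 : 0 ≤ (T - u) ^ (-α) := Real.rpow_nonneg (by linarith) _
  have p3 : 0 ≤ (T / 2) ^ (-α) := Real.rpow_nonneg hT.le _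
  rcases le_total u (T / 2) with h | h
  · have : (T - u) ^ (-α) ≤ (T / 2) ^ (-α) :=
      Real.rpow_le_rpow_of_nonpos hT (by linarith) (by linarith)
    nlinarith
  · have : u ^ (-α) ≤ (T / 2) ^ (-α) :=
      Real.rpow_le_rpow_of_nonpos hT h (by linarith)
    nlinarith

def hfun (T α u : ℝ) : ℝ := u ^ (-α) + (T - u) ^ (-α) + 1

lemma hfun_one_le (T α u : ℝ) (h0 : 0 < u) (hu : u < T) : 1 ≤ hfun T α u := by
  have p1 : 0 ≤ u ^ (-α) := Real.rpow_nonneg h0.le _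
  have p2 : 0 ≤ (T - u) ^ (-α) := Real.rpow_nonneg (by linarith) _
  unfold hfun; linarith

lemma hfun_pow (T α u : ℝ) (h0 : 0 < u) (hu : u < T) :
    hfun T α u ^ 4 ≤ 27 * (u ^ (-(4 * α)) + (T - u) ^ (-(4 * α)) + 1) := by
  have p1 : 0 ≤ u ^ (-α) := Real.rpow_nonneg h0.le _
  have p2 : 0 ≤ (T - u) ^ (-α) := Real.rpow_nonneg (by linarith) _
  have e : ∀ x : ℝ, 0 < x → x ^ (-(4 * α)) = (x ^ (-α)) ^ 4 := by
    intro x hx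
    rw [← Real.rpow_natCast, ← Real.rpow_mul hx.le]; congr 1; push_cast; ring
  rw [e u h0, e (T - u) (by linarith)]
  unfold hfun
  generalize u ^ (-α) = a at *
  generalize (T - u) ^ (-α) = b at *
  have s1 : (a + b + 1) ^ 2 ≤ 3 * (a ^ 2 + b ^ 2 + 1) := by
    nlinarith [sq_nonneg (a - b), sq_nonneg (a - 1), sq_nonneg (b - 1)]
  have s2 : (a ^ 2 + b ^ 2 + 1) ^ 2 ≤ 3 * (a ^ 4 + b ^ 4 + 1) := by
    nlinarith [sq_nonneg (a ^ 2 - b ^ 2), sq_nonneg (a ^ 2 - 1), sq_nonneg (b ^ 2 - 1)]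
  have s3 : ((a + b + 1) ^ 2) ^ 2 ≤ (3 * (a ^ 2 + b ^ 2 + 1)) ^ 2 :=
    pow_le_pow_left₀ (sq_nonneg _) s1 2
  nlinarith

lemma hfun_int (T α : ℝ) (hT : 0 < T) (hα' : α < 1 / 4) :
    ∫⁻ u in Ioo (0:ℝ) T, ENNReal.ofReal (hfun T α u ^ 4) < ⊤ := by
  have i1 : IntervalIntegrable (fun u : ℝ => u ^ (-(4 * α))) volume 0 T :=
    intervalIntegral.intervalIntegrable_rpow' (by linarith)
  have i2 : IntervalIntegrable (fun u : ℝ => (T - u) ^ (-(4 * α))) volume 0 T := by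
    have h := i1.comp_sub_left T
    simpa using h.symm
  have i3 : IntervalIntegrable
      (fun u : ℝ => 27 * (u ^ (-(4 * α)) + (T - u) ^ (-(4 * α)) + 1)) volume 0 T :=
    ((i1.add i2).add intervalIntegrable_const).const_mul 27
  have i4 := (intervalIntegrable_iff_integrableOn_Ioo_of_le hT.le).1 i3
  refine lt_of_le_of_lt (setLIntegral_mono' measurableSet_Ioo ?_) i4.lintegral_lt_top
  intro u hu
  exact ENNReal.ofReal_le_ofReal (hfun_pow T α u hu.1 hu.2)

lemma aux_bound {E : Type*} [NormedAddCommGroup E] [NormedSpace ℝ E]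
    (T α lam : ℝ) (hT : 0 < T) (hα : 0 ≤ α)
    (K K' : ℝ → ℝ → ℝ) (hA : ∃ C : ℝ, CondA T α C K K')
    (ψ : ℝ → ℝ → E) (hlam : 0 < lam)
    (hψ : IsStrongHolderBi T lam ψ) (hαlam : α < lam) :
    ∃ M : ℝ, 0 ≤ M ∧ ∀ u ∈ Ioo (0:ℝ) T, ∀ v ∈ Ioo (0:ℝ) T,
      ‖KstarT T K K' ψ u v‖ ≤ M * (hfun T α u * hfun T α v) := by
  obtain ⟨C₀, hK0, hK1⟩ := hA
  obtain ⟨D₀, ⟨h1, h2⟩, h3⟩ := hψ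
  obtain ⟨C, hC, hCC⟩ : ∃ C : ℝ, 0 ≤ C ∧ C₀ ≤ C := ⟨|C₀|, abs_nonneg _, le_abs_self _⟩
  obtain ⟨D, hD, hDD⟩ : ∃ D : ℝ, 0 ≤ D ∧ D₀ ≤ D := ⟨|D₀|, abs_nonneg _, le_abs_self _⟩
  set δ := lam - α with hδd
  have hδ : 0 < δ := by linarith
  have hP : 0 ≤ T ^ δ / δ := div_nonneg (Real.rpow_nonneg hT.le _) hδ.le
  set P := T ^ δ / δ with hPd
  have k1 : ∀ s r : ℝ, 0 < s → s < r → r ≤ T → |K' r s| ≤ C * (r - s) ^ (-(α + 1)) := by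
    intro s r a b c
    refine (hK1 s r a b c).2.trans ?_
    have := Real.rpow_nonneg (show 0 ≤ r - s by linarith) (-(α + 1))
    gcongr
  -- product of the singular kernel and the Hölder bound
  have comb : ∀ s r : ℝ, s < r → (r - s) ^ (-(α + 1)) * |r - s| ^ lam = (r - s) ^ (δ - 1) := by
    intro s r h
    have hp : 0 < r - s := by linarith
    rw [abs_of_pos hp, ← Real.rpow_add hp]; congr 1; rw [hδd]; ring
  have kb : ∀ u ∈ Ioo (0:ℝ) T, |K T u| ≤ C * (T / 2) ^ (-α) * hfun T α u := by
    intro u hu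
    have p3 : 0 ≤ (T / 2) ^ (-α) := Real.rpow_nonneg (by linarith) _
    have p1 : 0 ≤ u ^ (-α) := Real.rpow_nonneg hu.1.le _
    have p2 : 0 ≤ (T - u) ^ (-α) := Real.rpow_nonneg (by linarith [hu.2]) _
    calc |K T u| ≤ C₀ * u ^ (-α) * (T - u) ^ (-α) := hK0 u T hu.1 hu.2 le_rfl
      _ ≤ C * u ^ (-α) * (T - u) ^ (-α) := by gcongr
      _ = C * (u ^ (-α) * (T - u) ^ (-α)) := by ring
      _ ≤ C * ((T / 2) ^ (-α) * (u ^ (-α) + (T - u) ^ (-α))) := by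
        exact mul_le_mul_of_nonneg_left (aux_k T α u hα hu.1 hu.2) hC
      _ ≤ C * ((T / 2) ^ (-α) * hfun T α u) := by
        refine mul_le_mul_of_nonneg_left (mul_le_mul_of_nonneg_left ?_ p3) hC
        unfold hfun; linarith
      _ = _ := by ring
  have Ab : ∀ φ : ℝ → E, (∀ s ∈ Icc (0:ℝ) T, ∀ r ∈ Icc (0:ℝ) T,
      ‖φ r - φ s‖ ≤ D₀ * |r - s| ^ lam) → ∀ u ∈ Ioo (0:ℝ) T,
      ‖AK T K' φ u‖ ≤ C * D * P := by
    intro φ hφ u hu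
    refine aux_int_s10 T δ (C * D) u hδ (by positivity) hu.1.le hu.2.le _ ?_
    intro r hr
    have q1 := k1 u r hu.1 hr.1 hr.2
    have q2 := hφ u ⟨hu.1.le, hu.2.le⟩ r ⟨by linarith [hu.1, hr.1], hr.2⟩
    have q0 : 0 ≤ |r - u| ^ lam := Real.rpow_nonneg (abs_nonneg _) _
    have q3 : ‖φ r - φ u‖ ≤ D * |r - u| ^ lam := q2.trans (by gcongr)
    rw [norm_smul, Real.norm_eq_abs, ← comb u r hr.1]
    calc |K' r u| * ‖φ r - φ u‖ ≤ (C * (r - u) ^ (-(α + 1))) * (D * |r - u| ^ lam) :=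
          mul_le_mul q1 q3 (norm_nonneg _) ((abs_nonneg _).trans q1)
      _ = _ := by ring
  have Bb : ∀ u ∈ Ioo (0:ℝ) T, ∀ v ∈ Ioo (0:ℝ) T,
      ‖BK T K' ψ u v‖ ≤ C * C * D * P * P := by
    intro u hu v hv
    refine aux_int_s10 T δ (C * C * D * P) v hδ (by positivity) hv.1.le hv.2.le _ ?_
    intro r₂ hr₂
    have z2 : 0 ≤ (r₂ - v) ^ (δ - 1) := Real.rpow_nonneg (by linarith [hr₂.1]) _
    have := aux_int_s10 T δ (C * C * D * (r₂ - v) ^ (δ - 1)) u hδ (by positivity) hu.1.le hu.2.le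
      (fun r₁ => (K' r₁ u * K' r₂ v) • rectInc ψ u r₁ v r₂) ?_
    · refine this.trans (le_of_eq ?_)
      rw [← hPd]; ring
    intro r₁ hr₁
    have q1 := k1 u r₁ hu.1 hr₁.1 hr₁.2
    have q1' := k1 v r₂ hv.1 hr₂.1 hr₂.2
    have q2 := h3 u ⟨hu.1.le, hu.2.le⟩ r₁ ⟨by linarith [hu.1, hr₁.1], hr₁.2⟩
      v ⟨hv.1.le, hv.2.le⟩ r₂ ⟨by linarith [hv.1, hr₂.1], hr₂.2⟩
    have q0 : 0 ≤ |r₁ - u| ^ lam := Real.rpow_nonneg (abs_nonneg _) _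
    have q0' : 0 ≤ |r₂ - v| ^ lam := Real.rpow_nonneg (abs_nonneg _) _
    have q3 : ‖rectInc ψ u r₁ v r₂‖ ≤ D * |r₁ - u| ^ lam * |r₂ - v| ^ lam :=
      q2.trans (by gcongr)
    rw [norm_smul, Real.norm_eq_abs, abs_mul, ← comb u r₁ hr₁.1, ← comb v r₂ hr₂.1]
    have q4 := mul_le_mul q1 q1' (abs_nonneg _) ((abs_nonneg _).trans q1)
    calc _ ≤ ((C * (r₁ - u) ^ (-(α + 1))) * (C * (r₂ - v) ^ (-(α + 1)))) *
            (D * |r₁ - u| ^ lam * |r₂ - v| ^ lam) :=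
          mul_le_mul q4 q3 (norm_nonneg _)
            ((mul_nonneg (abs_nonneg _) (abs_nonneg _)).trans q4)
      _ = _ := by ring
  obtain ⟨N, hN, hNb⟩ : ∃ N : ℝ, 0 ≤ N ∧ ∀ u ∈ Ioo (0:ℝ) T, ∀ v ∈ Ioo (0:ℝ) T,
      ‖ψ u v‖ ≤ N := by
    have hTl : 0 ≤ T ^ lam := Real.rpow_nonneg hT.le _
    refine ⟨‖ψ 0 0‖ + D * T ^ lam + D * T ^ lam, by positivity, ?_⟩
    intro u hu v hv
    have z : (0:ℝ) ∈ Icc (0:ℝ) T := ⟨le_rfl, hT.le⟩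
    have a1 := h1 0 z u ⟨hu.1.le, hu.2.le⟩ v ⟨hv.1.le, hv.2.le⟩
    have a2 := h2 0 z 0 z v ⟨hv.1.le, hv.2.le⟩
    have b : ∀ x ∈ Ioo (0:ℝ) T, D₀ * |x - 0| ^ lam ≤ D * T ^ lam := by
      intro x hx
      have : |x - 0| ^ lam ≤ T ^ lam := by
        apply Real.rpow_le_rpow (abs_nonneg _) _ hlam.le
        rw [sub_zero, abs_of_pos hx.1]; exact hx.2.le
      have q0 : 0 ≤ |x - 0| ^ lam := Real.rpow_nonneg (abs_nonneg _) _
      exact mul_le_mul hDD this q0 hD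
    have e : ψ u v = ψ 0 0 + (ψ 0 v - ψ 0 0) + (ψ u v - ψ 0 v) := by abel
    rw [e]
    refine (norm_add₃_le).trans ?_
    have := b u hu
    have := b v hv
    linarith
  set Q := C * (T / 2) ^ (-α) with hQd
  have hQ : 0 ≤ Q := mul_nonneg hC (Real.rpow_nonneg (by linarith) _)
  have hR : 0 ≤ C * D * P := by positivity
  set R := C * D * P with hRd
  have hS : 0 ≤ C * C * D * P * P := by positivity
  set S := C * C * D * P * P with hSd
  refine ⟨Q * Q * N + Q * R + Q * R + S, by positivity, ?_⟩
  intro u hu v hv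
  have ou := hfun_one_le T α u hu.1 hu.2
  have ov := hfun_one_le T α v hv.1 hv.2
  have ku := kb u hu
  have kv := kb v hv
  have au := Ab (fun x => ψ x v) (fun s hs r hr => h1 s hs r hr v ⟨hv.1.le, hv.2.le⟩) u hu
  have av := Ab (fun y => ψ u y) (fun s hs r hr => h2 u ⟨hu.1.le, hu.2.le⟩ s hs r hr) v hv
  have bb := Bb u hu v hv
  have nb := hNb u hu v hv
  unfold KstarT
  set a := hfun T α u
  set b := hfun T α v
  have hab1 : a ≤ a * b := by nlinarith
  have hab2 : b ≤ a * b := by nlinarith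
  have hab3 : 1 ≤ a * b := by nlinarith
  have t1 : ‖(K T u * K T v) • ψ u v‖ ≤ Q * Q * N * (a * b) := by
    rw [norm_smul, Real.norm_eq_abs, abs_mul]
    have q4 := mul_le_mul ku kv (abs_nonneg _) ((abs_nonneg _).trans ku)
    calc _ ≤ (Q * a * (Q * b)) * N := mul_le_mul q4 nb (norm_nonneg _) (by positivity)
      _ = _ := by ring
  have t2 : ‖K T v • AK T K' (fun x => ψ x v) u‖ ≤ Q * R * (a * b) := by
    rw [norm_smul, Real.norm_eq_abs]
    calc _ ≤ (Q * b) * R := mul_le_mul kv au (norm_nonneg _) (by positivity)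
      _ = Q * R * b := by ring
      _ ≤ _ := by gcongr
  have t3 : ‖K T u • AK T K' (fun y => ψ u y) v‖ ≤ Q * R * (a * b) := by
    rw [norm_smul, Real.norm_eq_abs]
    calc _ ≤ (Q * a) * R := mul_le_mul ku av (norm_nonneg _) (by positivity)
      _ = Q * R * a := by ring
      _ ≤ _ := by gcongr
  have t4 : ‖BK T K' ψ u v‖ ≤ S * (a * b) := bb.trans (by nlinarith)
  refine (norm_add_le _ _).trans ?_
  refine (add_le_add_left norm_add₃_le _).trans ?_
  linarith

/-- Lemma 3.7: integrability of `(𝒦*⊗𝒦*)ψ`: its fourth power is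
integrable on `[0,T]²` and the square of its diagonal is integrable on `[0,T]`. -/
theorem kstarT_integrability {E : Type*} [NormedAddCommGroup E] [NormedSpace ℝ E]
    [CompleteSpace E] (T α lam : ℝ) (hT : 0 < T) (hα : 0 ≤ α) (hα' : α < 1 / 4)
    (K K' : ℝ → ℝ → ℝ) (hK : IsVolterraKernel K) (hA : ∃ C : ℝ, CondA T α C K K')
    (ψ : ℝ → ℝ → E) (hlam : 0 < lam) (hlam' : lam ≤ 1)
    (hψ : IsStrongHolderBi T lam ψ) (hαlam : α < lam) :
    (∫⁻ u in Icc (0:ℝ) T, ∫⁻ v in Icc (0:ℝ) T,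
        (‖KstarT T K K' ψ u v‖₊ : ENNReal) ^ 4) < ⊤ ∧
    (∫⁻ r in Icc (0:ℝ) T, (‖KstarT T K K' ψ r r‖₊ : ENNReal) ^ 2) < ⊤ := by
  obtain ⟨M, hM, hb⟩ := aux_bound T α lam hT hα K K' hA ψ hlam hψ hαlam
  have hH := hfun_int T α hT hα'
  set H := ∫⁻ u in Ioo (0:ℝ) T, ENNReal.ofReal (hfun T α u ^ 4) with hHd
  have conv : ∀ (x : E) (y : ℝ) (n : ℕ), ‖x‖ ≤ y →
      (‖x‖₊ : ENNReal) ^ n ≤ ENNReal.ofReal (y ^ n) := by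
    intro x y n h
    rw [ENNReal.ofReal_pow ((norm_nonneg _).trans h)]
    gcongr
    rw [← enorm_eq_nnnorm, ← ofReal_norm]
    exact ENNReal.ofReal_le_ofReal h
  have hr : (volume.restrict (Icc (0:ℝ) T)) = volume.restrict (Ioo (0:ℝ) T) :=
    (Measure.restrict_congr_set Ioo_ae_eq_Icc).symm
  rw [hr]
  constructor
  · have step : ∀ u ∈ Ioo (0:ℝ) T, ∫⁻ v in Ioo (0:ℝ) T,
        (‖KstarT T K K' ψ u v‖₊ : ENNReal) ^ 4 ≤
        (ENNReal.ofReal (M ^ 4) * H) * ENNReal.ofReal (hfun T α u ^ 4) := by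
      intro u hu
      calc _ ≤ ∫⁻ v in Ioo (0:ℝ) T, (ENNReal.ofReal (M ^ 4) * ENNReal.ofReal (hfun T α u ^ 4)) *
              ENNReal.ofReal (hfun T α v ^ 4) := by
            refine setLIntegral_mono' measurableSet_Ioo ?_
            intro v hv
            refine (conv _ _ 4 (hb u hu v hv)).trans (le_of_eq ?_)
            rw [← ENNReal.ofReal_mul (by positivity), ← ENNReal.ofReal_mul (by positivity)]
            congr 1; ring
        _ = _ := by
            rw [lintegral_const_mul' _ _ (ENNReal.mul_ne_top ENNReal.ofReal_ne_top
              ENNReal.ofReal_ne_top), ← hHd]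
            ring
    refine lt_of_le_of_lt (setLIntegral_mono' measurableSet_Ioo step) ?_
    have hne : ENNReal.ofReal (M ^ 4) * H ≠ ⊤ := ENNReal.mul_ne_top ENNReal.ofReal_ne_top hH.ne
    rw [lintegral_const_mul' _ _ hne, ← hHd]
    exact ENNReal.mul_lt_top hne.lt_top hH
  · have step : ∀ r ∈ Ioo (0:ℝ) T, (‖KstarT T K K' ψ r r‖₊ : ENNReal) ^ 2 ≤
        ENNReal.ofReal (M ^ 2) * ENNReal.ofReal (hfun T α r ^ 4) := by
      intro r hr
      refine (conv _ _ 2 (hb r hr r hr)).trans (le_of_eq ?_)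
      rw [← ENNReal.ofReal_mul (by positivity)]
      congr 1; ring
    refine lt_of_le_of_lt (setLIntegral_mono' measurableSet_Ioo step) ?_
    rw [lintegral_const_mul' _ _ ENNReal.ofReal_ne_top, ← hHd]
    exact ENNReal.mul_lt_top ENNReal.ofReal_lt_top hH


end YS
end
end

section
/- Let E be a Banach space, T > 0, and let K be a Volterra kernel on [0,T] satisfying Condition (A) with exponent α ∈ [0, 1/4) and constant C_K. Let ψ: [0,T]² → E be strongly λ-Hölder bi-continuous with constant C_ψ and λ > α. Then for all (u,v) ∈ (0,T)², the double integral B(ψ)(u,v) := ∫_v^T ∫_u^T ψ(u,r₁;v,r₂) (∂K(r₁,u)/∂r₁) (∂K(r₂,v)/∂r₂) dr₁ dr₂ converges absolutely and satisfies ‖B(ψ)(u,v)‖_E ≤ C_ψ C_K² (λ−α)^(−2) (T−u)^(λ−α) (T−v)^(λ−α). -/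
open MeasureTheory Set

noncomputable section

namespace YS

variable {E : Type*} [NormedAddCommGroup E] [NormedSpace ℝ E]

theorem aux_int_s11 (u T c : ℝ) (hc : 0 < c) :
    IntervalIntegrable (fun x : ℝ => (x - u) ^ (c - 1)) volume u T ∧
    ∫ x in u..T, (x - u) ^ (c - 1) = (T - u) ^ c / c := by
  constructor
  · have h := (intervalIntegral.intervalIntegrable_rpow' (a := 0) (b := T - u)
      (r := c - 1) (by linarith)).comp_sub_right u
    simpa using h
  · rw [intervalIntegral.integral_comp_sub_right (fun x : ℝ => x ^ (c - 1)) u,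
      integral_rpow (Or.inl (by linarith))]
    simp [Real.zero_rpow hc.ne']

/-- absolute convergence of the double integral defining `B^K(ψ)(u,v)`
and the bound `‖B^K(ψ)(u,v)‖ ≤ C_ψ C_K² (λ−α)⁻² (T−u)^{λ−α} (T−v)^{λ−α}`. -/
theorem BK_bound {E : Type*} [NormedAddCommGroup E] [NormedSpace ℝ E] [CompleteSpace E]
    (T α lam CK Cψ : ℝ) (hT : 0 < T) (hα : 0 ≤ α) (hα' : α < 1 / 4)
    (K K' : ℝ → ℝ → ℝ) (hK : IsVolterraKernel K) (hA : CondA T α CK K K')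
    (ψ : ℝ → ℝ → E) (hlam : 0 < lam) (hlam' : lam ≤ 1)
    (hψ : IsStrongHolderBiWith T lam Cψ ψ) (hαlam : α < lam) :
    ∀ u ∈ Ioo (0:ℝ) T, ∀ v ∈ Ioo (0:ℝ) T,
      (∫⁻ p in (Ioc u T) ×ˢ (Ioc v T),
          (‖(K' p.1 u * K' p.2 v) • rectInc ψ u p.1 v p.2‖₊ : ENNReal)) < ⊤ ∧
      ‖BK T K' ψ u v‖ ≤
        Cψ * CK ^ 2 * ((lam - α) ^ 2)⁻¹ * (T - u) ^ (lam - α) * (T - v) ^ (lam - α) := by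
  intro u hu v hv
  obtain ⟨hu0, huT⟩ := hu
  obtain ⟨hv0, hvT⟩ := hv
  have hc : 0 < lam - α := by linarith
  set c := lam - α with hcdef
  have hpt : ∀ x ∈ Ioc u T, ∀ y ∈ Ioc v T,
      ‖(K' x u * K' y v) • rectInc ψ u x v y‖ ≤
        Cψ * CK ^ 2 * (x - u) ^ (c - 1) * (y - v) ^ (c - 1) := by
    intro x hx y hy
    have h1 := (hA.2 u x hu0 hx.1 hx.2).2
    have h2 := (hA.2 v y hv0 hy.1 hy.2).2
    have h3 := hψ.2 u ⟨hu0.le, huT.le⟩ x ⟨(hu0.trans hx.1).le, hx.2⟩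
      v ⟨hv0.le, hvT.le⟩ y ⟨(hv0.trans hy.1).le, hy.2⟩
    have hx' : 0 < x - u := sub_pos.2 hx.1
    have hy' : 0 < y - v := sub_pos.2 hy.1
    rw [abs_of_pos hx', abs_of_pos hy'] at h3
    have e : ∀ z : ℝ, 0 < z → z ^ (c - 1) = z ^ (-(α + 1)) * z ^ lam := by
      intro z hz
      rw [← Real.rpow_add hz]
      congr 1
      rw [hcdef]; ring
    rw [norm_smul, Real.norm_eq_abs, abs_mul, e _ hx', e _ hy']
    have h12 := mul_le_mul h1 h2 (abs_nonneg _) ((abs_nonneg _).trans h1)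
    have := mul_le_mul h12 h3 (norm_nonneg _)
      ((mul_nonneg (abs_nonneg _) (abs_nonneg _)).trans h12)
    refine this.trans (le_of_eq ?_)
    ring
  obtain ⟨iu, eu⟩ := aux_int_s11 u T c hc
  obtain ⟨iv, ev⟩ := aux_int_s11 v T c hc
  constructor
  · have hI : IntegrableOn (fun p : ℝ × ℝ =>
        Cψ * CK ^ 2 * (p.1 - u) ^ (c - 1) * (p.2 - v) ^ (c - 1)) (Ioc u T ×ˢ Ioc v T) := by
      have h1 := (intervalIntegrable_iff_integrableOn_Ioc_of_le huT.le).1 iu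
      have h2 := (intervalIntegrable_iff_integrableOn_Ioc_of_le hvT.le).1 iv
      have h := ((Integrable.const_mul h1 (Cψ * CK ^ 2)).mul_prod h2)
      rw [Measure.prod_restrict] at h
      exact h
    refine lt_of_le_of_lt ?_ hI.hasFiniteIntegral
    refine setLIntegral_mono' (measurableSet_Ioc.prod measurableSet_Ioc) ?_
    intro p hp
    have h := hpt p.1 hp.1 p.2 hp.2
    have h' := h.trans (le_abs_self _)
    rw [← Real.norm_eq_abs] at h'
    exact enorm_le_iff_norm_le.2 h'
  · have hin : ∀ y ∈ Ioc v T,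
        ‖∫ x in u..T, (K' x u * K' y v) • rectInc ψ u x v y‖ ≤
          (Cψ * CK ^ 2 * ((T - u) ^ c / c)) * (y - v) ^ (c - 1) := by
      intro y hy
      refine (intervalIntegral.norm_integral_le_of_norm_le huT.le
        (Filter.Eventually.of_forall fun x hx => hpt x hx y hy)
        ((iu.const_mul _).mul_const _)).trans (le_of_eq ?_)
      rw [intervalIntegral.integral_mul_const, intervalIntegral.integral_const_mul, eu]
    unfold BK
    refine (intervalIntegral.norm_integral_le_of_norm_le hvT.le
        (Filter.Eventually.of_forall fun y hy => hin y hy)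
        (iv.const_mul _)).trans (le_of_eq ?_)
    rw [intervalIntegral.integral_const_mul, ev]
    field_simp

end YS
end
end

section
/- Let E be a Banach space, T > 0, and let K be a Volterra kernel on [0,T] satisfying Condition (A) with exponent α ∈ [0, 1/4), such that for each s ∈ (0,T) and each a with s < a ≤ T one has K(T,s) − K(a,s) = ∫_a^T (∂K(r,s)/∂r) dr. Let φ: [0,T] → E be λ-Hölder continuous with λ > α, and let a ∈ (0,T]. Then for every s ∈ (0,T), K*(φ·1_{[0,a)})(s) = 1_{[0,a)}(s) · ( φ(s) K(a,s) + ∫_s^a [φ(r) − φ(s)] (∂K(r,s)/∂r) dr ). -/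
open MeasureTheory Set

noncomputable section

namespace YS

variable {E : Type*} [NormedAddCommGroup E] [NormedSpace ℝ E]

/-- the identity for `𝒦*(φ·1_{[0,a)})`. -/
theorem kstar_indicator {E : Type*} [NormedAddCommGroup E] [NormedSpace ℝ E]
    [CompleteSpace E] (T α lam : ℝ) (hT : 0 < T) (hα : 0 ≤ α) (hα' : α < 1 / 4)
    (K K' : ℝ → ℝ → ℝ) (hK : IsVolterraKernel K) (hA : ∃ C : ℝ, CondA T α C K K')
    (hFTC : ∀ s a : ℝ, 0 < s → s < a → a ≤ T → K T s - K a s = ∫ r in a..T, K' r s)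
    (φ : ℝ → E) (hlam : 0 < lam) (hlam' : lam ≤ 1)
    (hφ : IsHolder T lam φ) (hαlam : α < lam) (a : ℝ) (ha : a ∈ Ioc (0:ℝ) T) :
    ∀ s ∈ Ioo (0:ℝ) T,
      Kstar T K K' ((Ico (0:ℝ) a).indicator φ) s =
        (Ico (0:ℝ) a).indicator
          (fun s' => K a s' • φ s' + ∫ r in s'..a, K' r s' • (φ r - φ s')) s := by
  obtain ⟨C, hA1, hA2⟩ := hA
  obtain ⟨D, hD⟩ := hφ
  obtain ⟨ha0, haT⟩ := ha
  rintro s ⟨hs0, hsT⟩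
  unfold Kstar
  by_cases hsa : s < a
  swap
  · have hsa' : a ≤ s := not_lt.mp hsa
    have h1 : ∀ r, s ≤ r → (Ico (0:ℝ) a).indicator φ r = 0 := fun r hr =>
      indicator_of_notMem (fun h => absurd h.2 (not_lt.mpr (hsa'.trans hr))) _
    rw [h1 s le_rfl, indicator_of_notMem (fun h => hsa h.2), smul_zero, zero_add]
    rw [intervalIntegral.integral_congr (g := fun _ => (0:E)), intervalIntegral.integral_zero]
    intro r hr
    rw [uIcc_of_le hsT.le] at hr
    simp [h1 r hr.1]
  have hsm : s ∈ Ico (0:ℝ) a := ⟨hs0.le, hsa⟩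
  rw [indicator_of_mem hsm, indicator_of_mem hsm]
  -- measurability
  have hmeasT : AEStronglyMeasurable (fun r => K' r s) (volume.restrict (Ioc s T)) := by
    refine (measurable_deriv (fun r => K r s)).aestronglyMeasurable.congr ?_
    filter_upwards [ae_restrict_mem measurableSet_Ioc] with r hr
    exact (hA2 s r hs0 hr.1 hr.2).1.deriv
  have hcont : ContinuousOn φ (Icc 0 T) := by
    intro x hx
    rw [ContinuousWithinAt, tendsto_iff_norm_sub_tendsto_zero]
    have hlim : Filter.Tendsto (fun y => D * |y - x| ^ lam) (nhdsWithin x (Icc 0 T)) (nhds 0) := by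
      have hc : Continuous (fun y : ℝ => D * |y - x| ^ lam) :=
        continuous_const.mul ((continuous_id.sub continuous_const).abs.rpow_const
          (fun _ => Or.inr hlam.le))
      have := (hc.tendsto x).mono_left (nhdsWithin_le_nhds (s := Icc 0 T))
      simpa [Real.zero_rpow hlam.ne'] using this
    refine squeeze_zero' (Filter.Eventually.of_forall fun _ => norm_nonneg _) ?_ hlim
    filter_upwards [self_mem_nhdsWithin] with y hy
    exact hD y hy x hx
  have hint1 : IntervalIntegrable (fun r => K' r s • (φ r - φ s)) volume s a := by
    have hb : IntervalIntegrable (fun r => C * D * (r - s) ^ (lam - (α + 1))) volume s a := by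
      have h0 : IntervalIntegrable (fun r : ℝ => r ^ (lam - (α + 1))) volume (s - s) (a - s) :=
        intervalIntegral.intervalIntegrable_rpow' (by linarith)
      have := (h0.comp_sub_right s).const_mul (C * D)
      simpa using this
    rw [intervalIntegrable_iff_integrableOn_Ioc_of_le hsa.le] at hb ⊢
    refine Integrable.mono' hb ?_ ?_
    · refine (hmeasT.mono_measure (Measure.restrict_mono (Ioc_subset_Ioc_right haT) le_rfl)).smul ?_
      refine (ContinuousOn.aestronglyMeasurable ?_ measurableSet_Ioc)
      refine (hcont.mono ?_).sub continuousOn_const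
      exact fun r hr => ⟨(hs0.trans hr.1).le, hr.2.trans haT⟩
    · filter_upwards [ae_restrict_mem measurableSet_Ioc] with r hr
      have hrs : 0 < r - s := sub_pos.mpr hr.1
      have e1 := (hA2 s r hs0 hr.1 (hr.2.trans haT)).2
      have e2 := hD r ⟨(hs0.trans hr.1).le, hr.2.trans haT⟩ s ⟨hs0.le, hsT.le⟩
      rw [abs_of_pos hrs] at e2
      rw [norm_smul, Real.norm_eq_abs]
      calc |K' r s| * ‖φ r - φ s‖
          ≤ (C * (r - s) ^ (-(α + 1))) * (D * (r - s) ^ lam) :=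
            mul_le_mul e1 e2 (norm_nonneg _) ((abs_nonneg _).trans e1)
        _ = C * D * (r - s) ^ (lam - (α + 1)) := by
            rw [sub_eq_add_neg lam, Real.rpow_add hrs]; ring
  have hint2 : IntervalIntegrable (fun r => K' r s) volume a T := by
    have hb : IntervalIntegrable (fun r => C * (r - s) ^ (-(α + 1))) volume a T := by
      apply ContinuousOn.intervalIntegrable
      rw [uIcc_of_le haT]
      refine continuousOn_const.mul ((continuousOn_id.sub continuousOn_const).rpow_const ?_)
      intro r hr
      exact Or.inl (sub_pos.mpr (hsa.trans_le hr.1)).ne'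
    rw [intervalIntegrable_iff_integrableOn_Ioc_of_le haT] at hb ⊢
    refine Integrable.mono' hb
      (hmeasT.mono_measure (Measure.restrict_mono (Ioc_subset_Ioc_left hsa.le) le_rfl)) ?_
    filter_upwards [ae_restrict_mem measurableSet_Ioc] with r hr
    exact (hA2 s r hs0 (hsa.trans hr.1) hr.2).2
  have hae : ∀ᵐ r ∂(volume : Measure ℝ), r ∈ uIoc s a →
      K' r s • (φ r - φ s) = K' r s • ((Ico (0:ℝ) a).indicator φ r - φ s) := by
    filter_upwards [compl_mem_ae_iff.mpr (measure_singleton a)] with r hra hr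
    rw [uIoc_of_le hsa.le] at hr
    rw [indicator_of_mem]
    exact ⟨(hs0.trans hr.1).le, lt_of_le_of_ne hr.2 hra⟩
  have heq : ∀ r ∈ uIcc a T,
      K' r s • ((Ico (0:ℝ) a).indicator φ r - φ s) = K' r s • (-φ s) := by
    intro r hr
    rw [uIcc_of_le haT] at hr
    rw [indicator_of_notMem (fun h => absurd h.2 (not_lt.mpr hr.1)), zero_sub]
  have hI1 : IntervalIntegrable (fun r => K' r s • ((Ico (0:ℝ) a).indicator φ r - φ s))
      volume s a := by
    refine hint1.congr_ae ?_
    exact (ae_restrict_iff' measurableSet_uIoc).mpr hae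
  have hI2 : IntervalIntegrable (fun r => K' r s • ((Ico (0:ℝ) a).indicator φ r - φ s))
      volume a T := by
    have h0 : IntervalIntegrable (fun r => K' r s • (-φ s)) volume a T := by
      rw [intervalIntegrable_iff] at hint2 ⊢
      exact Integrable.smul_const hint2 _
    exact h0.congr (fun r hr => (heq r (uIoc_subset_uIcc hr)).symm)
  rw [← intervalIntegral.integral_add_adjacent_intervals hI1 hI2,
    ← intervalIntegral.integral_congr_ae hae, intervalIntegral.integral_congr heq,
    intervalIntegral.integral_smul_const, ← hFTC s a hs0 hsa haT]
  rw [smul_neg, sub_smul]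
  abel

end YS
end
end
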